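/- Let θ : ℝⁿ → [−∞,+∞] be symmetric, let g = θ∘λ be the associated spectral function, and let X ∈ Sⁿ be such that g is prox-regular at X. Then g is twice differentiable at X if and only if θ is twice differentiable at λ(X). If either holds, then for every H ∈ Sⁿ, ⟨∇²g(X)H, H⟩ = ⟨∇²θ(λ(X))·λ'(X;H), λ'(X;H)⟩ + 2·∑_{m=1}^{r} ⟨Diag(y_{α_m}), U_{α_m}ᵀ·H·(μ_m·I − X)^†·H·U_{α_m}⟩, where y = ∇θ(λ(X)) and U ∈ Oⁿ(X). -/

import Mathlib

open Filter Topology Matrix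

noncomputable section

namespace SpecPaper

/-! ## Generic variational analysis definitions over a topological real vector space -/

variable {E : Type*}

section Generic

variable [AddCommGroup E] [Module ℝ E] [TopologicalSpace E]

/-- `f x` is finite (neither `+∞` nor `-∞`). -/
def IsFiniteAt (f : E → EReal) (x : E) : Prop :=
  f x ≠ ⊤ ∧ f x ≠ ⊥

/-- The norm induced by a given inner product. -/
noncomputable def nrm (ip : E → E → ℝ) (x : E) : ℝ :=
  Real.sqrt (ip x x)

/-- The subderivative `df(x)(w)`. -/
noncomputable def subderiv (f : E → EReal) (x w : E) : EReal :=
  Filter.liminf (fun p : ℝ × E => (((p.1)⁻¹ : ℝ) : EReal) * (f (x + p.1 • p.2) - f x))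
    ((nhdsWithin (0 : ℝ) (Set.Ioi 0)) ×ˢ nhds w)

/-- The second-order difference quotient `Δ²ₜ f(x,v)(w)`. -/
noncomputable def sdq2 (ip : E → E → ℝ) (f : E → EReal) (x v : E) (t : ℝ) (w : E) : EReal :=
  (((2 / t ^ 2) : ℝ) : EReal) * (f (x + t • w) - f x - ((t * ip v w : ℝ) : EReal))

/-- The second subderivative `d²f(x,v)(w)`. -/
noncomputable def subderiv2 (ip : E → E → ℝ) (f : E → EReal) (x v w : E) : EReal :=
  Filter.liminf (fun p : ℝ × E => sdq2 ip f x v p.1 p.2)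
    ((nhdsWithin (0 : ℝ) (Set.Ioi 0)) ×ˢ nhds w)

/-- Twice epi-differentiability of `f` at `x` for `v`. -/
def TwiceEpiDiff (ip : E → E → ℝ) (f : E → EReal) (x v : E) : Prop :=
  IsFiniteAt f x ∧
    ∀ t : ℕ → ℝ, (∀ k, 0 < t k) → Tendsto t atTop (nhds 0) →
      ∀ w : E, ∃ ws : ℕ → E, Tendsto ws atTop (nhds w) ∧
        Tendsto (fun k => sdq2 ip f x v (t k) (ws k)) atTop (nhds (subderiv2 ip f x v w))

/-- `v` is a regular subgradient of `f` at `x`. -/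
def RegSubgrad (ip : E → E → ℝ) (f : E → EReal) (x v : E) : Prop :=
  IsFiniteAt f x ∧
    (0 : EReal) ≤ Filter.liminf
      (fun y : E =>
        (((nrm ip (y - x))⁻¹ : ℝ) : EReal) * (f y - f x - ((ip v (y - x) : ℝ) : EReal)))
      (nhdsWithin x {x}ᶜ)

/-- `v` is a (limiting) subgradient of `f` at `x`. -/
def LimSubgrad (ip : E → E → ℝ) (f : E → EReal) (x v : E) : Prop :=
  ∃ xs vs : ℕ → E, (∀ k, RegSubgrad ip f (xs k) (vs k)) ∧
    Tendsto xs atTop (nhds x) ∧ Tendsto vs atTop (nhds v) ∧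
    Tendsto (fun k => f (xs k)) atTop (nhds (f x))

/-- The tangent cone to `C` at `x`. -/
def tangentCone (C : Set E) (x : E) : Set E :=
  {w | ∃ (t : ℕ → ℝ) (ws : ℕ → E), (∀ k, 0 < t k) ∧ Tendsto t atTop (nhds 0) ∧
    Tendsto ws atTop (nhds w) ∧ ∀ k, x + t k • ws k ∈ C}

/-- The regular normal cone to `C` at `x`. -/
def regNormalCone (ip : E → E → ℝ) (C : Set E) (x : E) : Set E :=
  {v | ∀ w ∈ tangentCone C x, ip v w ≤ 0}

/-- The limiting normal cone to `C` at `x`. -/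
def limNormalCone (ip : E → E → ℝ) (C : Set E) (x : E) : Set E :=
  {v | ∃ xs vs : ℕ → E, (∀ k, xs k ∈ C) ∧ (∀ k, vs k ∈ regNormalCone ip C (xs k)) ∧
    Tendsto xs atTop (nhds x) ∧ Tendsto vs atTop (nhds v)}

/-- The critical cone `C_f(x,v)`. -/
def criticalCone (ip : E → E → ℝ) (f : E → EReal) (x v : E) : Set E :=
  {w | subderiv f x w = ((ip v w : ℝ) : EReal)}

/-- `f` is locally Lipschitz continuous at `x` relative to its domain. -/
def LocLipAtRelDom (ip : E → E → ℝ) (f : E → EReal) (x : E) : Prop :=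
  IsFiniteAt f x ∧
    ∃ V ∈ nhds x, ∃ ℓ : ℝ, 0 ≤ ℓ ∧
      ∀ a ∈ V, ∀ b ∈ V, f a ≠ ⊤ → f b ≠ ⊤ →
        f a ≠ ⊥ ∧ f b ≠ ⊥ ∧ |(f a).toReal - (f b).toReal| ≤ ℓ * nrm ip (a - b)

/-- `f` is locally Lipschitz continuous relative to its domain. -/
def LocLipRelDom (ip : E → E → ℝ) (f : E → EReal) : Prop :=
  ∀ x : E, f x ≠ ⊤ → LocLipAtRelDom ip f x

/-- `v` is a proximal subgradient of `f` at `x`. -/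
def ProxSubgrad (ip : E → E → ℝ) (f : E → EReal) (x v : E) : Prop :=
  IsFiniteAt f x ∧
    ∃ r > (0 : ℝ), ∃ ε > (0 : ℝ), ∀ x' : E, nrm ip (x' - x) ≤ ε →
      f x + ((ip v (x' - x) - r / 2 * ip (x' - x) (x' - x) : ℝ) : EReal) ≤ f x'

/-- `f` is prox-regular at `x` for `v`. -/
def ProxRegularAtFor (ip : E → E → ℝ) (f : E → EReal) (x v : E) : Prop :=
  IsFiniteAt f x ∧
    (∃ δ > (0 : ℝ), LowerSemicontinuousOn f {x' | nrm ip (x' - x) < δ}) ∧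
    ∃ ε > (0 : ℝ), ∃ r : ℝ, 0 ≤ r ∧
      ∀ x₁ v₁ : E, LimSubgrad ip f x₁ v₁ → nrm ip (x₁ - x) < ε → nrm ip (v₁ - v) < ε →
        f x₁ < f x + (ε : EReal) →
        ∀ x' : E, nrm ip (x' - x) < ε →
          f x₁ + ((ip v₁ (x' - x₁) - r / 2 * ip (x' - x₁) (x' - x₁) : ℝ) : EReal) ≤ f x'

/-- `f` is prox-regular at `x` (for every subgradient). -/
def ProxRegularAt (ip : E → E → ℝ) (f : E → EReal) (x : E) : Prop :=
  ∀ v : E, LimSubgrad ip f x v → ProxRegularAtFor ip f x v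

/-- `f` is subdifferentially continuous at `x`. -/
def SubdiffContAt (ip : E → E → ℝ) (f : E → EReal) (x : E) : Prop :=
  ∀ v : E, LimSubgrad ip f x v →
    ∀ xs vs : ℕ → E, (∀ k, LimSubgrad ip f (xs k) (vs k)) →
      Tendsto xs atTop (nhds x) → Tendsto vs atTop (nhds v) →
      Tendsto (fun k => f (xs k)) atTop (nhds (f x))

/-- `f` is prox-bounded. -/
def ProxBounded (ip : E → E → ℝ) (f : E → EReal) : Prop :=
  ∃ α c : ℝ, ∀ x : E, (c : EReal) ≤ f x + ((α * ip x x : ℝ) : EReal)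

/-- The proximal mapping (as a set of minimizers). -/
def proxSet (ip : E → E → ℝ) (f : E → EReal) (γ : ℝ) (x : E) : Set E :=
  {w | ∀ w' : E,
    f w + ((1 / (2 * γ) * ip (w - x) (w - x) : ℝ) : EReal) ≤
      f w' + ((1 / (2 * γ) * ip (w' - x) (w' - x) : ℝ) : EReal)}

/-- The proximal map of `f` with parameter `γ` is single-valued around `z` and the resulting
map is directionally differentiable at `z`. -/
def ProxSingleDirDiff (ip : E → E → ℝ) (f : E → EReal) (γ : ℝ) (z : E) : Prop :=
  ∃ V ∈ nhds z, ∃ P : E → E, (∀ u ∈ V, proxSet ip f γ u = {P u}) ∧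
    ∀ h : E, ∃ L : E,
      Tendsto (fun t : ℝ => t⁻¹ • (P (z + t • h) - P z)) (nhdsWithin 0 (Set.Ioi 0)) (nhds L)

/-- The parabolic difference quotient. -/
noncomputable def parabQuot (f : E → EReal) (x w : E) (t : ℝ) (z : E) : EReal :=
  (((2 / t ^ 2) : ℝ) : EReal) *
    (f (x + t • w + (t ^ 2 / 2) • z) - f x - ((t * (subderiv f x w).toReal : ℝ) : EReal))

/-- The parabolic subderivative `d²f(x)(w | z)`. -/
noncomputable def parabSubderiv (f : E → EReal) (x w z : E) : EReal :=
  Filter.liminf (fun p : ℝ × E => parabQuot f x w p.1 p.2)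
    ((nhdsWithin (0 : ℝ) (Set.Ioi 0)) ×ˢ nhds z)

/-- `f` is parabolically epi-differentiable at `x` for `w`. -/
def ParabEpiDiff (f : E → EReal) (x w : E) : Prop :=
  (∃ z : E, parabSubderiv f x w z < ⊤) ∧
    ∀ t : ℕ → ℝ, (∀ k, 0 < t k) → Tendsto t atTop (nhds 0) →
      ∀ z : E, ∃ zs : ℕ → E, Tendsto zs atTop (nhds z) ∧
        Tendsto (fun k => parabQuot f x w (t k) (zs k)) atTop (nhds (parabSubderiv f x w z))

/-- `φ` is a generalized quadratic form: its domain is a linear subspace and on the domain it is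
given by a symmetric linear operator. -/
def IsGQF (ip : E → E → ℝ) (φ : E → EReal) : Prop :=
  (φ 0 ≠ ⊤) ∧
  (∀ x y : E, φ x ≠ ⊤ → φ y ≠ ⊤ → φ (x + y) ≠ ⊤) ∧
  (∀ (c : ℝ) (x : E), φ x ≠ ⊤ → φ (c • x) ≠ ⊤) ∧
  ∃ L : E → E,
    (∀ x y : E, φ x ≠ ⊤ → φ y ≠ ⊤ → L (x + y) = L x + L y) ∧
    (∀ (c : ℝ) (x : E), φ x ≠ ⊤ → L (c • x) = c • L x) ∧
    (∀ x y : E, φ x ≠ ⊤ → φ y ≠ ⊤ → ip (L x) y = ip x (L y)) ∧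
    (∀ x : E, φ x ≠ ⊤ → φ x = ((ip (L x) x : ℝ) : EReal))

/-- `f` is generalized twice differentiable at `x` for `v`. -/
def GenTwiceDiff (ip : E → E → ℝ) (f : E → EReal) (x v : E) : Prop :=
  TwiceEpiDiff ip f x v ∧ IsGQF ip (subderiv2 ip f x v)

/-- Proto-differentiability of a set-valued map `F` at `x` for `y ∈ F x`. -/
def ProtoDiff (F : E → Set E) (x y : E) : Prop :=
  ∀ w η : E, (w, η) ∈ tangentCone {p : E × E | p.2 ∈ F p.1} (x, y) →
    ∀ t : ℕ → ℝ, (∀ k, 0 < t k) → Tendsto t atTop (nhds 0) →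
      ∃ ws ηs : ℕ → E, Tendsto ws atTop (nhds w) ∧ Tendsto ηs atTop (nhds η) ∧
        ∀ k, y + t k • ηs k ∈ F (x + t k • ws k)

/-- Relative interior of a set (interior relative to its affine hull). -/
def relInterior (C : Set E) : Set E :=
  {y | y ∈ C ∧ ∃ V ∈ nhds y, ∀ z ∈ V, z ∈ affineSpan ℝ C → z ∈ C}

/-- A polyhedral set: the intersection of finitely many closed half-spaces. -/
def IsPolyhedral (ip : E → E → ℝ) (C : Set E) : Prop :=
  ∃ (k : ℕ) (a : Fin k → E) (b : Fin k → ℝ), C = {x | ∀ j : Fin k, ip (a j) x ≤ b j}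

/-- The subdifferential of a convex function. -/
def convexSubdiff (ip : E → E → ℝ) (f : E → EReal) (x : E) : Set E :=
  {v | ∀ z : E, f x + ((ip v (z - x) : ℝ) : EReal) ≤ f z}

/-- The natural inner product on `E × ℝ`. -/
def ipProd (ip : E → E → ℝ) : E × ℝ → E × ℝ → ℝ :=
  fun p q => ip p.1 q.1 + p.2 * q.2

/-- The epigraph of `f`. -/
def epiSet (f : E → EReal) : Set (E × ℝ) :=
  {p | f p.1 ≤ (p.2 : EReal)}

/-- `f` is subdifferentially regular at `x`. -/
def SubdiffRegularAt (ip : E → E → ℝ) (f : E → EReal) (x : E) : Prop :=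
  IsFiniteAt f x ∧
    regNormalCone (ipProd ip) (epiSet f) (x, (f x).toReal) =
      limNormalCone (ipProd ip) (epiSet f) (x, (f x).toReal)

/-! Real-valued versions: semidifferentiability, gradients. -/

/-- `f` is semidifferentiable at `x`. -/
def SemiDiffAt (f : E → ℝ) (x : E) : Prop :=
  ∀ w : E, ∃ d : ℝ,
    Tendsto (fun p : ℝ × E => (p.1)⁻¹ * (f (x + p.1 • p.2) - f x))
      ((nhdsWithin (0 : ℝ) (Set.Ioi 0)) ×ˢ nhds w) (nhds d)

/-- The (real value of the) subderivative of a real-valued function. -/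
noncomputable def dReal (f : E → ℝ) (x w : E) : ℝ :=
  (subderiv (fun y => ((f y : ℝ) : EReal)) x w).toReal

/-- The second-order difference quotient built from the subderivative. -/
noncomputable def sdq2R (f : E → ℝ) (x : E) (t : ℝ) (w : E) : ℝ :=
  (2 / t ^ 2) * (f (x + t • w) - f x - t * dReal f x w)

/-- `f` is twice semidifferentiable at `x`. -/
def TwiceSemiDiffAt (f : E → ℝ) (x : E) : Prop :=
  SemiDiffAt f x ∧
    ∀ w : E, ∃ d : ℝ,
      Tendsto (fun p : ℝ × E => sdq2R f x p.1 p.2)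
        ((nhdsWithin (0 : ℝ) (Set.Ioi 0)) ×ˢ nhds w) (nhds d)

/-- The second semiderivative `d²f(x)(w)` (the liminf; it is the full limit whenever `f` is
twice semidifferentiable at `x`). -/
noncomputable def secondSemiDeriv (f : E → ℝ) (x w : E) : EReal :=
  Filter.liminf (fun p : ℝ × E => ((sdq2R f x p.1 p.2 : ℝ) : EReal))
    ((nhdsWithin (0 : ℝ) (Set.Ioi 0)) ×ˢ nhds w)

/-- `f` is (Fréchet) differentiable at `x` with gradient `g` (w.r.t. inner product `ip`). -/
def HasGradAt (ip : E → E → ℝ) (f : E → ℝ) (x g : E) : Prop :=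
  Tendsto (fun y : E => (nrm ip (y - x))⁻¹ * (f y - f x - ip g (y - x)))
    (nhdsWithin x {x}ᶜ) (nhds 0)

/-- `f` is locally Lipschitz continuous around `x`. -/
def LocLipAt (ip : E → E → ℝ) (f : E → ℝ) (x : E) : Prop :=
  ∃ V ∈ nhds x, ∃ ℓ : ℝ, 0 ≤ ℓ ∧ ∀ a ∈ V, ∀ b ∈ V, |f a - f b| ≤ ℓ * nrm ip (a - b)

/-- `f` is twice differentiable at `x` with gradient map `G` near `x` and second derivative
(the derivative of `G` at `x`) given by the linear map `Dxx`. -/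
def HasSecondDerivAt (ip : E → E → ℝ) (f : E → EReal) (x : E) (G : E → E) (Dxx : E → E) :
    Prop :=
  ∃ V ∈ nhds x, ∃ fr : E → ℝ,
    (∀ z ∈ V, f z = ((fr z : ℝ) : EReal)) ∧
    (∀ z ∈ V, HasGradAt ip fr z (G z)) ∧
    IsLinearMap ℝ Dxx ∧
    Tendsto (fun z : E => (nrm ip (z - x))⁻¹ • (G z - G x - Dxx (z - x)))
      (nhdsWithin x {x}ᶜ) (nhds 0)

/-- `f` is twice differentiable at `x`. -/
def TwiceDiffAt (ip : E → E → ℝ) (f : E → EReal) (x : E) : Prop :=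
  ∃ G Dxx : E → E, HasSecondDerivAt ip f x G Dxx

end Generic

/-! ## Eigenvalues and spectral machinery -/

open scoped Classical in
/-- The eigenvalues of a real symmetric matrix, arranged in nonincreasing order
(junk value `0` if the matrix is not symmetric). -/
noncomputable def eigval {n : ℕ} (X : Matrix (Fin n) (Fin n) ℝ) : Fin n → ℝ :=
  if h : X.IsHermitian then
    fun i => h.eigenvalues (Tuple.sort (fun j => -h.eigenvalues j) i)
  else 0

/-- `Oⁿ(X)`: orthogonal matrices realizing the ordered spectral decomposition of `X`. -/
def eigOrth {n : ℕ} (X : Matrix (Fin n) (Fin n) ℝ) : Set (Matrix (Fin n) (Fin n) ℝ) :=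
  {U | U * Uᵀ = 1 ∧ X = U * Matrix.diagonal (eigval X) * Uᵀ}

open scoped Classical in
/-- The block `α_m` of indices `j` whose eigenvalue `λ_j(X)` equals `λ_i(X)`. -/
noncomputable def blockSet {n : ℕ} (X : Matrix (Fin n) (Fin n) ℝ) (i : Fin n) :
    Finset (Fin n) :=
  Finset.univ.filter fun j => eigval X j = eigval X i

lemma mem_blockSet_self {n : ℕ} (X : Matrix (Fin n) (Fin n) ℝ) (i : Fin n) :
    i ∈ blockSet X i := by
  simp [blockSet]

/-- The increasing enumeration of the block of `i`. -/
noncomputable def blockEmb {n : ℕ} (X : Matrix (Fin n) (Fin n) ℝ) (i : Fin n) :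
    Fin (blockSet X i).card → Fin n :=
  fun a => ((blockSet X i).orderIsoOfFin rfl a : Fin n)

/-- The position of `i` inside its own block. -/
noncomputable def blockIdx {n : ℕ} (X : Matrix (Fin n) (Fin n) ℝ) (i : Fin n) :
    Fin (blockSet X i).card :=
  ((blockSet X i).orderIsoOfFin rfl).symm ⟨i, mem_blockSet_self X i⟩

/-- The principal submatrix of `M` corresponding to the block of `i` (for `X`). -/
noncomputable def blockMat {n : ℕ} (X M : Matrix (Fin n) (Fin n) ℝ) (i : Fin n) :
    Matrix (Fin (blockSet X i).card) (Fin (blockSet X i).card) ℝ :=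
  Matrix.of fun a b => M (blockEmb X i a) (blockEmb X i b)

/-- The directional derivative `λ'(X;H)` of the ordered eigenvalue map, computed through
`U ∈ Oⁿ(X)`: blockwise ordered eigenvalues of `U_{α_m}ᵀ H U_{α_m}`. -/
noncomputable def lambdaDir {n : ℕ} (X U H : Matrix (Fin n) (Fin n) ℝ) : Fin n → ℝ :=
  fun i => eigval (blockMat X (Uᵀ * H * U) i) (blockIdx X i)

open scoped Classical in
/-- The Moore–Penrose pseudoinverse of a square real matrix, characterized by the four
Penrose equations. -/
noncomputable def pinv {n : ℕ} (A : Matrix (Fin n) (Fin n) ℝ) :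
    Matrix (Fin n) (Fin n) ℝ :=
  if h : ∃ B : Matrix (Fin n) (Fin n) ℝ,
      A * B * A = A ∧ B * A * B = B ∧ (A * B)ᵀ = A * B ∧ (B * A)ᵀ = B * A
  then h.choose else 0

/-- The curvature term `2 ∑ₘ ⟨Diag(y)_{αₘαₘ}, U_{αₘ}ᵀ H (μₘ I - X)† H U_{αₘ}⟩`, written as a
single sum over all indices. -/
noncomputable def curvTerm {n : ℕ} (X U H : Matrix (Fin n) (Fin n) ℝ) (y : Fin n → ℝ) : ℝ :=
  2 * ∑ i : Fin n, y i *
    (Uᵀ * (H * pinv (eigval X i • (1 : Matrix (Fin n) (Fin n) ℝ) - X) * H) * U) i i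

/-- Two symmetric matrices admit a simultaneous ordered spectral decomposition. -/
def simOrdSpec {k : ℕ} (A B : Matrix (Fin k) (Fin k) ℝ) : Prop :=
  ∃ P : Matrix (Fin k) (Fin k) ℝ, P * Pᵀ = 1 ∧
    A = P * Matrix.diagonal (eigval A) * Pᵀ ∧
    B = P * Matrix.diagonal (eigval B) * Pᵀ

/-- The subspace of symmetric `n × n` real matrices. -/
def symSubmodule (n : ℕ) : Submodule ℝ (Matrix (Fin n) (Fin n) ℝ) where
  carrier := {A | A.IsSymm}
  add_mem' := by
    intro a b ha hb
    simp only [Set.mem_setOf_eq, Matrix.IsSymm] at *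
    rw [Matrix.transpose_add, ha, hb]
  zero_mem' := by
    simp only [Set.mem_setOf_eq, Matrix.IsSymm, Matrix.transpose_zero]
  smul_mem' := by
    intro c a ha
    simp only [Set.mem_setOf_eq, Matrix.IsSymm] at *
    rw [Matrix.transpose_smul, ha]

/-- The space `Sⁿ` of symmetric `n × n` real matrices. -/
abbrev Sym (n : ℕ) : Type := ↥(symSubmodule n)

/-- The trace inner product `⟨A, B⟩ = tr(AB)` on `Sⁿ`. -/
noncomputable def ipM {n : ℕ} (A B : Sym n) : ℝ :=
  ((A : Matrix (Fin n) (Fin n) ℝ) * (B : Matrix (Fin n) (Fin n) ℝ)).trace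

/-- The Euclidean inner product on `ℝⁿ`. -/
def ipV {n : ℕ} (v w : Fin n → ℝ) : ℝ :=
  ∑ i, v i * w i

/-- The spectral function `g = θ ∘ λ` on `Sⁿ`. -/
noncomputable def specFn {n : ℕ} (θ : (Fin n → ℝ) → EReal) : Sym n → EReal :=
  fun A => θ (eigval (A : Matrix (Fin n) (Fin n) ℝ))

/-- A function on `ℝⁿ` is symmetric (permutation invariant). -/
def SymmetricFn {n : ℕ} {α : Type*} (θ : (Fin n → ℝ) → α) : Prop :=
  ∀ (x : Fin n → ℝ) (σ : Equiv.Perm (Fin n)), θ (fun i => x (σ i)) = θ x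

/-- The diagonal matrix `Diag(w)` as an element of `Sⁿ`. -/
noncomputable def diagSym {n : ℕ} (w : Fin n → ℝ) : Sym n :=
  ⟨Matrix.diagonal w, Matrix.isSymm_diagonal w⟩

/-- The `i`-th order statistic: `orderStat x i` is the `i`-th largest entry of `x`. -/
noncomputable def orderStat {n : ℕ} (x : Fin n → ℝ) : Fin n → ℝ :=
  fun i => x (Tuple.sort (fun j => -x j) i)


section Part1

lemma exists_perm_of_map_eq {n : ℕ} (f g : Fin n → ℝ)
    (h : Finset.univ.val.map f = Finset.univ.val.map g) :
    ∃ σ : Equiv.Perm (Fin n), ∀ i, f i = g (σ i) := by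
  have hc : List.Perm (List.ofFn f) (List.ofFn g) := by
    rw [Fin.univ_val_map, Fin.univ_val_map] at h
    exact Multiset.coe_eq_coe.mp h
  have h1 := Equiv.Perm.ofFn_comp_perm (Tuple.sort f) f
  have h2 := Equiv.Perm.ofFn_comp_perm (Tuple.sort g) g
  have h3 := h1.trans (hc.trans h2.symm)
  have h4 := List.Perm.eq_of_sortedLE (Tuple.monotone_sort f).sortedLE_ofFn
    (Tuple.monotone_sort g).sortedLE_ofFn h3
  have h5 := List.ofFn_injective h4
  refine ⟨(Tuple.sort f).symm.trans (Tuple.sort g), fun i => ?_⟩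
  have := congrFun h5 ((Tuple.sort f).symm i)
  simpa using this

lemma eigval_of_herm {n : ℕ} {X : Matrix (Fin n) (Fin n) ℝ} (h : X.IsHermitian) :
    eigval X = fun i => h.eigenvalues (Tuple.sort (fun j => -h.eigenvalues j) i) := by
  unfold eigval
  rw [dif_pos h]

lemma eigval_antitone {n : ℕ} {X : Matrix (Fin n) (Fin n) ℝ} (h : X.IsHermitian) :
    Antitone (eigval X) := by
  rw [eigval_of_herm h]
  intro i j hij
  have := Tuple.monotone_sort (fun j => -h.eigenvalues j) hij
  simpa using this

lemma conj_diag_apply {n : ℕ} (U : Matrix (Fin n) (Fin n) ℝ) (d : Fin n → ℝ) (i j : Fin n) :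
    (U * diagonal d * Uᵀ) i j = ∑ k, U i k * d k * U j k := by
  rw [Matrix.mul_apply]
  simp [Matrix.mul_diagonal]

lemma eigOrth_nonempty {n : ℕ} {X : Matrix (Fin n) (Fin n) ℝ} (h : X.IsHermitian) :
    ∃ U, U ∈ eigOrth X := by
  set W : Matrix (Fin n) (Fin n) ℝ := h.eigenvectorUnitary.val with hW
  have hWW : W * Wᵀ = 1 := by
    have := Unitary.mul_star_self_of_mem h.eigenvectorUnitary.2
    simpa [star_eq_conjTranspose] using this
  have hs : X = W * diagonal h.eigenvalues * Wᵀ := by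
    have := h.spectral_theorem
    rw [Unitary.conjStarAlgAut_apply] at this
    simpa [star_eq_conjTranspose] using this
  set σ := Tuple.sort (fun j => -h.eigenvalues j) with hσ
  refine ⟨W.submatrix id σ, ?_, ?_⟩
  · ext i j
    rw [← hWW, Matrix.mul_apply, Matrix.mul_apply]
    simp only [Matrix.submatrix_apply, Matrix.transpose_apply, id]
    exact Equiv.sum_comp σ (fun k => W i k * W j k)
  · rw [eigval_of_herm h]
    ext i j
    rw [conj_diag_apply]
    conv_lhs => rw [hs]
    rw [conj_diag_apply]
    simp only [Matrix.submatrix_apply, id]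
    exact (Equiv.sum_comp σ (fun k => W i k * h.eigenvalues k * W j k)).symm

lemma isHerm_conj_diag {n : ℕ} (U : Matrix (Fin n) (Fin n) ℝ) (x : Fin n → ℝ) :
    (U * diagonal x * Uᵀ).IsHermitian := by
  ext i j
  simp only [Matrix.conjTranspose_apply, star_trivial, conj_diag_apply]
  exact Finset.sum_congr rfl fun k _ => by ring

lemma eigval_conj_diag {n : ℕ} (U : Matrix (Fin n) (Fin n) ℝ) (hU : U * Uᵀ = 1)
    (x : Fin n → ℝ) :
    ∃ σ : Equiv.Perm (Fin n), ∀ i, eigval (U * diagonal x * Uᵀ) i = x (σ i) := by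
  have h := isHerm_conj_diag U x
  have hU' : Uᵀ * U = 1 := mul_eq_one_comm.mp hU
  have h1 := h.roots_charpoly_eq_eigenvalues
  have h2 : (U * diagonal x * Uᵀ).charpoly = (diagonal x).charpoly := by
    rw [Matrix.charpoly_mul_comm, ← Matrix.mul_assoc, hU', Matrix.one_mul]
  have h3 : ((diagonal x).charpoly).roots = Finset.univ.val.map x := by
    rw [Matrix.charpoly_diagonal]
    rw [← Polynomial.roots_multiset_prod_X_sub_C (Finset.univ.val.map x)]
    congr 1
    rw [Multiset.map_map]
    rfl
  rw [h2, h3] at h1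
  obtain ⟨τ, hτ⟩ := exists_perm_of_map_eq h.eigenvalues x (by simpa using h1.symm)
  refine ⟨(Tuple.sort (fun j => -h.eigenvalues j)).trans τ, fun i => ?_⟩
  rw [eigval_of_herm h]
  simp [hτ]

lemma isHerm_sym {n : ℕ} (X : Sym n) : X.val.IsHermitian := by
  have h : X.valᵀ = X.val := X.2
  rw [Matrix.IsHermitian, Matrix.conjTranspose_eq_transpose_of_trivial]
  exact h

/-- quadratic form -/
lemma quad_eq {n : ℕ} (U : Matrix (Fin n) (Fin n) ℝ) (d v : Fin n → ℝ) :
    v ⬝ᵥ ((U * diagonal d * Uᵀ) *ᵥ v) = ∑ k, d k * ((Uᵀ *ᵥ v) k) ^ 2 := by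
  rw [← Matrix.mulVec_mulVec, ← Matrix.mulVec_mulVec, Matrix.dotProduct_mulVec,
    ← Matrix.mulVec_transpose]
  simp only [dotProduct, Matrix.mulVec_diagonal]
  exact Finset.sum_congr rfl fun k _ => by ring

lemma norm_orth {n : ℕ} (U : Matrix (Fin n) (Fin n) ℝ) (hU : U * Uᵀ = 1) (v : Fin n → ℝ) :
    ∑ k, ((Uᵀ *ᵥ v) k) ^ 2 = ∑ k, v k ^ 2 := by
  have := quad_eq U (fun _ => 1) v
  simp only [diagonal_one, Matrix.mul_one, hU, Matrix.one_mulVec, one_mul, dotProduct] at this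
  rw [← this]
  exact Finset.sum_congr rfl fun k _ => by ring

lemma weyl_aux {n : ℕ} {X Z : Matrix (Fin n) (Fin n) ℝ} (hX : X.IsHermitian)
    (hZ : Z.IsHermitian) (δ : ℝ) (h : ∀ k l, |Z k l - X k l| ≤ δ) (i : Fin n) :
    eigval Z i - eigval X i ≤ n * δ := by
  obtain ⟨U, hU, hUX⟩ := eigOrth_nonempty hX
  obtain ⟨V, hV, hVZ⟩ := eigOrth_nonempty hZ
  let L : (Fin n → ℝ) →ₗ[ℝ] (Fin n → ℝ) :=
    { toFun := fun v k => if k < i then (Uᵀ *ᵥ v) k else if i < k then (Vᵀ *ᵥ v) k else 0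
      map_add' := by
        intro v w; ext k; simp only [Matrix.mulVec_add, Pi.add_apply]; split_ifs <;> simp
      map_smul' := by
        intro c v; ext k
        simp only [Matrix.mulVec_smul, Pi.smul_apply, RingHom.id_apply]; split_ifs <;> simp }
  have hL : ∀ v k, L v k = if k < i then (Uᵀ *ᵥ v) k else if i < k then (Vᵀ *ᵥ v) k else 0 :=
    fun _ _ => rfl
  have hns : ¬ Function.Surjective L := by
    intro hs
    obtain ⟨v, hv⟩ := hs (Pi.single i 1)
    have := congrFun hv i
    rw [hL] at this
    simp at this
  have hni : ¬ Function.Injective L := fun hi => hns (LinearMap.injective_iff_surjective.mp hi)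
  rw [← LinearMap.ker_eq_bot, Submodule.eq_bot_iff] at hni
  push Not at hni
  obtain ⟨v, hv, hv0⟩ := hni
  have hv' : ∀ k, L v k = 0 := fun k => congrFun (LinearMap.mem_ker.mp hv) k
  have hpos : 0 < ∑ k, v k ^ 2 := by
    obtain ⟨k, hk⟩ := Function.ne_iff.mp hv0
    exact Finset.sum_pos' (fun j _ => sq_nonneg _) ⟨k, Finset.mem_univ _, by
      have : v k ≠ 0 := hk
      positivity⟩
  have hZq : eigval Z i * ∑ k, v k ^ 2 ≤ v ⬝ᵥ (Z *ᵥ v) := by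
    conv_rhs => rw [hVZ, quad_eq]
    rw [← norm_orth V hV v, Finset.mul_sum]
    refine Finset.sum_le_sum fun k _ => ?_
    rcases le_or_gt k i with hk | hk
    · exact mul_le_mul_of_nonneg_right (eigval_antitone hZ hk) (sq_nonneg _)
    · have := hv' k
      rw [hL, if_neg (not_lt.mpr hk.le), if_pos hk] at this
      simp [this]
  have hXq : v ⬝ᵥ (X *ᵥ v) ≤ eigval X i * ∑ k, v k ^ 2 := by
    conv_lhs => rw [hUX, quad_eq]
    rw [← norm_orth U hU v, Finset.mul_sum]
    refine Finset.sum_le_sum fun k _ => ?_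
    rcases lt_or_ge k i with hk | hk
    · have := hv' k
      rw [hL, if_pos hk] at this
      simp [this]
    · exact mul_le_mul_of_nonneg_right (eigval_antitone hX hk) (sq_nonneg _)
  have hδ : 0 ≤ δ := (abs_nonneg _).trans (h i i)
  have hdiff : v ⬝ᵥ (Z *ᵥ v) - v ⬝ᵥ (X *ᵥ v) ≤ n * δ * ∑ k, v k ^ 2 := by
    rw [← dotProduct_sub, ← Matrix.sub_mulVec]
    calc v ⬝ᵥ ((Z - X) *ᵥ v) = ∑ k, ∑ l, v k * ((Z k l - X k l) * v l) := by
          simp [dotProduct, Matrix.mulVec, Finset.mul_sum]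
      _ ≤ ∑ k, ∑ l, δ * (|v k| * |v l|) := by
          refine Finset.sum_le_sum fun k _ => Finset.sum_le_sum fun l _ => ?_
          refine (le_abs_self _).trans ?_
          rw [abs_mul, abs_mul]
          have h1 := h k l
          have h2 : 0 ≤ |v k| * |v l| := by positivity
          nlinarith
      _ = δ * (∑ k, |v k|) ^ 2 := by
          rw [sq, Finset.sum_mul_sum, Finset.mul_sum]
          simp [Finset.mul_sum]
      _ ≤ δ * (n * ∑ k, |v k| ^ 2) := by
          refine mul_le_mul_of_nonneg_left ?_ hδ
          have := @sq_sum_le_card_mul_sum_sq (Fin n) ℝ _ _ _ _ Finset.univ (fun k => |v k|)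
          simpa using this
      _ = n * δ * ∑ k, v k ^ 2 := by simp [sq_abs]; ring
  have : (eigval Z i - eigval X i) * ∑ k, v k ^ 2 ≤ n * δ * ∑ k, v k ^ 2 := by linarith
  exact le_of_mul_le_mul_right this hpos

lemma weyl {n : ℕ} {X Z : Matrix (Fin n) (Fin n) ℝ} (hX : X.IsHermitian)
    (hZ : Z.IsHermitian) (δ : ℝ) (h : ∀ k l, |Z k l - X k l| ≤ δ) (i : Fin n) :
    |eigval Z i - eigval X i| ≤ n * δ := by
  rw [abs_sub_le_iff]
  exact ⟨weyl_aux hX hZ δ h i, weyl_aux hZ hX δ (fun k l => by rw [abs_sub_comm]; exact h k l) i⟩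

lemma hermite {n : ℕ} (x y d : Fin n → ℝ) (h : ∀ i j, x i = x j → y i = y j ∧ d i = d j) :
    ∃ p : Polynomial ℝ, ∀ i, p.eval (x i) = y i ∧ p.derivative.eval (x i) = d i := by
  classical
  let s : Finset ℝ := Finset.univ.image x
  have ex : ∀ f : Fin n → ℝ, (∀ i j, x i = x j → f i = f j) →
      ∃ q : Polynomial ℝ, ∀ i, q.eval (x i) = f i := by
    intro f hf
    refine ⟨Lagrange.interpolate s id (fun u => if hu : ∃ i, x i = u then f hu.choose else 0), ?_⟩
    intro i
    have hmem : x i ∈ s := Finset.mem_image_of_mem _ (Finset.mem_univ _)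
    have := Lagrange.eval_interpolate_at_node (v := id)
      (fun u => if hu : ∃ i, x i = u then f hu.choose else 0) (Set.injOn_id (s : Set ℝ)) hmem
    simp only [id] at this
    rw [this]
    have hu : ∃ j, x j = x i := ⟨i, rfl⟩
    rw [dif_pos hu]
    exact hf _ _ hu.choose_spec
  obtain ⟨q, hq⟩ := ex y (fun i j hij => (h i j hij).1)
  let W := Lagrange.nodal s (id : ℝ → ℝ)
  obtain ⟨r, hr⟩ := ex (fun i => (d i - q.derivative.eval (x i)) / W.derivative.eval (x i))
    (fun i j hij => by rw [(h i j hij).2, hij])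
  refine ⟨q + W * r, fun i => ?_⟩
  have hmem : x i ∈ s := Finset.mem_image_of_mem _ (Finset.mem_univ _)
  have hW0 : W.eval (x i) = 0 := Lagrange.eval_nodal_at_node (v := id) hmem
  have hW1 : W.derivative.eval (x i) ≠ 0 := by
    have := Lagrange.eval_nodal_derivative_eval_node_eq (v := (id : ℝ → ℝ)) hmem
    simp only [id] at this
    rw [this, Lagrange.eval_nodal]
    refine Finset.prod_ne_zero_iff.mpr fun u hu => ?_
    have := Finset.ne_of_mem_erase hu
    exact sub_ne_zero.mpr (Ne.symm this)
  constructor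
  · simp [hW0, hq]
  · simp [hW0, Polynomial.derivative_mul, hr]
    field_simp
    ring


end Part1

section Part2
set_option linter.unusedSectionVars false

/-- Basic properties of an inner product. -/
structure GoodIP {E : Type*} [AddCommGroup E] [Module ℝ E] (ip : E → E → ℝ) : Prop where
  smul_right : ∀ (c : ℝ) (v w : E), ip v (c • w) = c * ip v w
  smul_left : ∀ (c : ℝ) (v w : E), ip (c • v) w = c * ip v w
  pos : ∀ v : E, v ≠ 0 → 0 < ip v v
  nondeg : ∀ v v' : E, (∀ w, ip v w = ip v' w) → v = v'

section Gen
variable {E : Type*} [AddCommGroup E] [Module ℝ E] [TopologicalSpace E] {ip : E → E → ℝ}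

lemma GoodIP.zero_right (h : GoodIP ip) (v : E) : ip v 0 = 0 := by
  have := h.smul_right 0 v 0
  simpa using this

lemma GoodIP.nrm_zero (h : GoodIP ip) : nrm ip (0 : E) = 0 := by
  simp [nrm, h.zero_right]

lemma nrm_nonneg (ip : E → E → ℝ) (v : E) : 0 ≤ nrm ip v := Real.sqrt_nonneg _

lemma GoodIP.nrm_pos (h : GoodIP ip) {v : E} (hv : v ≠ 0) : 0 < nrm ip v :=
  Real.sqrt_pos.mpr (h.pos v hv)

lemma GoodIP.nrm_smul (h : GoodIP ip) (c : ℝ) (v : E) : nrm ip (c • v) = |c| * nrm ip v := by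
  unfold nrm
  rw [h.smul_left, h.smul_right, ← mul_assoc, ← sq, Real.sqrt_mul (sq_nonneg c), Real.sqrt_sq_eq_abs]

lemma GoodIP.tendsto_iff (h : GoodIP ip) (x : E) (φ : E → ℝ) (hφ : φ x = 0) :
    Tendsto (fun y => (nrm ip (y - x))⁻¹ * φ y) (𝓝[{x}ᶜ] x) (𝓝 0) ↔
      φ =o[𝓝 x] (fun y => nrm ip (y - x)) := by
  have h1 : φ =o[𝓝 x] (fun y => nrm ip (y - x)) ↔ φ =o[𝓝[≠] x] (fun y => nrm ip (y - x)) := by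
    constructor
    · intro h; exact h.mono nhdsWithin_le_nhds
    · intro h'
      rw [← nhdsNE_sup_pure x]
      refine h'.sup ?_
      rw [Asymptotics.isLittleO_pure]
      exact hφ
  rw [h1, Asymptotics.isLittleO_iff_tendsto']
  · simp only [div_eq_inv_mul]
  · filter_upwards [self_mem_nhdsWithin] with y hy h0
    exact absurd h0 (h.nrm_pos (sub_ne_zero.mpr hy)).ne'

lemma GoodIP.hasGradAt_iff (h : GoodIP ip) (f : E → ℝ) (x g : E) :
    HasGradAt ip f x g ↔
      (fun y => f y - f x - ip g (y - x)) =o[𝓝 x] (fun y => nrm ip (y - x)) :=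
  h.tendsto_iff x (fun y => f y - f x - ip g (y - x)) (by simp [h.zero_right])

variable [ContinuousAdd E] [ContinuousSMul ℝ E]

lemma tendsto_line (x w : E) : Tendsto (fun t : ℝ => x + t • w) (𝓝[≠] 0) (𝓝 x) := by
  have : Continuous (fun t : ℝ => x + t • w) := by fun_prop
  have h := this.tendsto 0
  simp only [zero_smul, add_zero] at h
  exact h.mono_left nhdsWithin_le_nhds

lemma GoodIP.line (h : GoodIP ip) (x w : E) (φ : E → ℝ)
    (hφ : φ =o[𝓝 x] (fun y => nrm ip (y - x))) :
    Tendsto (fun t : ℝ => t⁻¹ * φ (x + t • w)) (𝓝[≠] 0) (𝓝 0) := by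
  have h1 := hφ.comp_tendsto (tendsto_line x w)
  have h2 : (fun t : ℝ => φ (x + t • w)) =o[𝓝[≠] 0] (fun t : ℝ => t) := by
    refine h1.trans_isBigO ?_
    refine Asymptotics.IsBigO.of_bound (nrm ip w) (Eventually.of_forall fun t => ?_)
    simp only [Function.comp, add_sub_cancel_left, h.nrm_smul]
    rw [Real.norm_eq_abs, abs_mul, abs_abs, abs_of_nonneg (nrm_nonneg ip w), mul_comm]
    rfl
  have h3 := h2.tendsto_div_nhds_zero
  simpa only [div_eq_inv_mul] using h3

lemma GoodIP.grad_line (h : GoodIP ip) {f : E → ℝ} {x g : E} (hf : HasGradAt ip f x g) (w : E) :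
    Tendsto (fun t : ℝ => t⁻¹ * (f (x + t • w) - f x)) (𝓝[≠] 0) (𝓝 (ip g w)) := by
  have h1 := (h.line x w _ ((h.hasGradAt_iff f x g).mp hf)).add_const (ip g w)
  rw [zero_add] at h1
  refine h1.congr' ?_
  filter_upwards [self_mem_nhdsWithin] with t ht
  have ht' : t ≠ 0 := ht
  rw [add_sub_cancel_left, h.smul_right]
  field_simp
  ring

lemma GoodIP.grad_unique (h : GoodIP ip) {f f' : E → ℝ} {x g g' : E} (hf : HasGradAt ip f x g)
    (hf' : HasGradAt ip f' x g') (hff : f =ᶠ[𝓝 x] f') : g = g' := by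
  refine h.nondeg _ _ fun w => ?_
  refine tendsto_nhds_unique ((h.grad_line hf w).congr' ?_) (h.grad_line hf' w)
  have h1 := (tendsto_line x w).eventually hff
  filter_upwards [h1] with t ht
  rw [ht, hff.eq_of_nhds]

end Gen

/-! ### The two spaces -/

lemma ipV_good {n : ℕ} : GoodIP (ipV (n := n)) where
  smul_right c v w := by
    simp only [ipV, Finset.mul_sum, Pi.smul_apply, smul_eq_mul]
    exact Finset.sum_congr rfl fun _ _ => by ring
  smul_left c v w := by
    simp only [ipV, Finset.mul_sum, Pi.smul_apply, smul_eq_mul]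
    exact Finset.sum_congr rfl fun _ _ => by ring
  pos v hv := by
    obtain ⟨k, hk⟩ := Function.ne_iff.mp hv
    have hk' : v k ≠ 0 := hk
    exact Finset.sum_pos' (fun j _ => mul_self_nonneg _) ⟨k, Finset.mem_univ _, mul_self_pos.mpr hk'⟩
  nondeg v v' h := by
    ext k
    have := h (Pi.single k 1)
    simpa [ipV, Pi.single_apply] using this

lemma ipM_eq {n : ℕ} (A B : Sym n) : ipM A B = ∑ i, ∑ j, A.val i j * B.val i j := by
  have hB : ∀ i j, B.val i j = B.val j i := fun i j => congrFun (congrFun B.2 j) i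
  simp only [ipM, Matrix.trace, Matrix.diag, Matrix.mul_apply]
  exact Finset.sum_congr rfl fun i _ => Finset.sum_congr rfl fun j _ => by rw [hB j i]

lemma sym_apply {n : ℕ} (A : Sym n) (i j : Fin n) : A.val i j = A.val j i :=
  congrFun (congrFun A.2 j) i

lemma ipM_sub_left {n : ℕ} (A A' B : Sym n) : ipM (A - A') B = ipM A B - ipM A' B := by
  simp only [ipM_eq, ← Finset.sum_sub_distrib]
  refine Finset.sum_congr rfl fun i _ => Finset.sum_congr rfl fun j _ => ?_
  simp [sub_mul]

lemma ipM_good {n : ℕ} : GoodIP (ipM (n := n)) := by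
  have hpos : ∀ v : Sym n, v ≠ 0 → 0 < ipM v v := by
    intro v hv
    have : ∃ i j, v.val i j ≠ 0 := by
      by_contra hc
      push Not at hc
      exact hv (Subtype.ext (Matrix.ext hc))
    obtain ⟨i, j, hij⟩ := this
    rw [ipM_eq]
    refine Finset.sum_pos' (fun k _ => Finset.sum_nonneg fun l _ => mul_self_nonneg _)
      ⟨i, Finset.mem_univ _, Finset.sum_pos' (fun l _ => mul_self_nonneg _)
        ⟨j, Finset.mem_univ _, mul_self_pos.mpr hij⟩⟩
  refine ⟨?_, ?_, hpos, ?_⟩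
  · intro c v w
    simp [ipM]
  · intro c v w
    simp [ipM]
  · intro v v' h
    by_contra hne
    have h1 := hpos (v - v') (sub_ne_zero.mpr hne)
    rw [ipM_sub_left, h, sub_self] at h1
    exact lt_irrefl _ h1

lemma entry_le_nrm {n : ℕ} (A : Sym n) (i j : Fin n) : |A.val i j| ≤ nrm ipM A := by
  refine Real.abs_le_sqrt ?_
  rw [ipM_eq]
  have h1 : A.val i j ^ 2 ≤ ∑ l, A.val i l * A.val i l := by
    rw [sq]
    exact Finset.single_le_sum (f := fun l => A.val i l * A.val i l)
      (fun l _ => mul_self_nonneg _) (Finset.mem_univ j)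
  exact h1.trans (Finset.single_le_sum (f := fun k => ∑ l, A.val k l * A.val k l)
      (fun k _ => Finset.sum_nonneg fun l _ => mul_self_nonneg _) (Finset.mem_univ i))

lemma entryV_le_nrm {n : ℕ} (v : Fin n → ℝ) (i : Fin n) : |v i| ≤ nrm ipV v := by
  refine Real.abs_le_sqrt ?_
  rw [sq]
  exact Finset.single_le_sum (f := fun l => v l * v l)
      (fun l _ => mul_self_nonneg _) (Finset.mem_univ i)

lemma nrmV_le {n : ℕ} (v : Fin n → ℝ) : nrm ipV v ≤ ∑ i, |v i| := by
  refine Real.sqrt_le_iff.mpr ⟨Finset.sum_nonneg fun _ _ => abs_nonneg _, ?_⟩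
  rw [sq, Finset.sum_mul_sum, ipV]
  refine Finset.sum_le_sum fun i _ => ?_
  rw [← abs_mul_abs_self]
  exact Finset.single_le_sum (f := fun l => |v i| * |v l|)
      (fun l _ => by positivity) (Finset.mem_univ i)

lemma continuous_entry {n : ℕ} (i j : Fin n) : Continuous (fun Z : Sym n => Z.val i j) := by
  have : Continuous (fun Z : Sym n => Z.val) := continuous_subtype_val
  exact this.matrix_elem i j

lemma continuous_nrmM {n : ℕ} (X : Sym n) : Continuous (fun Z : Sym n => nrm ipM (Z - X)) := by
  unfold nrm
  refine Real.continuous_sqrt.comp ?_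
  simp only [ipM_eq, Submodule.coe_sub, Matrix.sub_apply]
  exact continuous_finsetSum _ fun i _ => continuous_finsetSum _ fun j _ =>
    ((continuous_entry i j).sub continuous_const).mul ((continuous_entry i j).sub continuous_const)

lemma continuous_eigval {n : ℕ} : Continuous (fun Z : Sym n => eigval Z.val) := by
  refine continuous_pi fun i => continuous_iff_continuousAt.mpr fun X => ?_
  rw [ContinuousAt, tendsto_iff_norm_sub_tendsto_zero]
  have h1 : Tendsto (fun Z : Sym n => (n : ℝ) * nrm ipM (Z - X)) (𝓝 X) (𝓝 0) := by
    have := ((continuous_nrmM X).tendsto X).const_mul (n : ℝ)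
    simpa [ipM_good.nrm_zero] using this
  refine squeeze_zero (fun _ => norm_nonneg _) (fun Z => ?_) h1
  exact weyl (isHerm_sym X) (isHerm_sym Z) _ (fun k l => entry_le_nrm (Z - X) k l) i

lemma eigval_isBigO {n : ℕ} (X : Sym n) (i : Fin n) :
    (fun Z : Sym n => eigval Z.val i - eigval X.val i) =O[𝓝 X] (fun Z => nrm ipM (Z - X)) := by
  refine Asymptotics.IsBigO.of_bound n (Eventually.of_forall fun Z => ?_)
  rw [Real.norm_of_nonneg (nrm_nonneg ipM (Z - X))]
  exact weyl (isHerm_sym X) (isHerm_sym Z) _ (fun k l => entry_le_nrm (Z - X) k l) i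

lemma tendstoM_iff {n : ℕ} (X : Sym n) (F : Sym n → Sym n) (hF : F X = 0) :
    Tendsto (fun Z => (nrm ipM (Z - X))⁻¹ • F Z) (𝓝[{X}ᶜ] X) (𝓝 0) ↔
      ∀ i j, (fun Z => (F Z).val i j) =o[𝓝 X] (fun Z => nrm ipM (Z - X)) := by
  rw [tendsto_subtype_rng]
  have : ∀ A : Matrix (Fin n) (Fin n) ℝ, ∀ (l : Filter (Sym n)) (f : Sym n → Matrix (Fin n) (Fin n) ℝ),
      Tendsto f l (𝓝 A) ↔ ∀ i j, Tendsto (fun z => f z i j) l (𝓝 (A i j)) := by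
    intro A l f
    refine (tendsto_pi_nhds (A := fun _ : Fin n => Fin n → ℝ) (f := f) (g := A)).trans ?_
    exact forall_congr' fun i => tendsto_pi_nhds
  rw [this]
  refine forall_congr' fun i => forall_congr' fun j => ?_
  rw [← ipM_good.tendsto_iff X (fun Z => (F Z).val i j) (by simp [hF])]
  simp

lemma tendstoV_iff {n : ℕ} (x : Fin n → ℝ) (F : (Fin n → ℝ) → (Fin n → ℝ)) (hF : F x = 0) :
    Tendsto (fun z => (nrm ipV (z - x))⁻¹ • F z) (𝓝[{x}ᶜ] x) (𝓝 0) ↔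
      ∀ i, (fun z => F z i) =o[𝓝 x] (fun z => nrm ipV (z - x)) := by
  rw [tendsto_pi_nhds]
  refine forall_congr' fun i => ?_
  rw [← ipV_good.tendsto_iff x (fun z => F z i) (by simp [hF])]
  simp

lemma secM_iff {n : ℕ} (X : Sym n) (G D : Sym n → Sym n) (hD : IsLinearMap ℝ D) :
    Tendsto (fun Z => (nrm ipM (Z - X))⁻¹ • (G Z - G X - D (Z - X))) (𝓝[{X}ᶜ] X) (𝓝 0) ↔
      ∀ i j, (fun Z => (G Z - G X - D (Z - X)).val i j) =o[𝓝 X] (fun Z => nrm ipM (Z - X)) :=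
  tendstoM_iff X (fun Z => G Z - G X - D (Z - X)) (by simp [hD.map_zero])

lemma secV_iff {n : ℕ} (x : Fin n → ℝ) (G D : (Fin n → ℝ) → (Fin n → ℝ)) (hD : IsLinearMap ℝ D) :
    Tendsto (fun z => (nrm ipV (z - x))⁻¹ • (G z - G x - D (z - x))) (𝓝[{x}ᶜ] x) (𝓝 0) ↔
      ∀ i, (fun z => (G z - G x - D (z - x)) i) =o[𝓝 x] (fun z => nrm ipV (z - x)) :=
  tendstoV_iff x (fun z => G z - G x - D (z - x)) (by simp [hD.map_zero])

lemma secM_line {n : ℕ} {X : Sym n} {G D : Sym n → Sym n} (hD : IsLinearMap ℝ D)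
    (h : ∀ i j, (fun Z => (G Z - G X - D (Z - X)).val i j) =o[𝓝 X] (fun Z => nrm ipM (Z - X)))
    (H : Sym n) (i j : Fin n) :
    Tendsto (fun t : ℝ => t⁻¹ * ((G (X + t • H)).val i j - (G X).val i j)) (𝓝[≠] 0)
      (𝓝 ((D H).val i j)) := by
  have h1 := (ipM_good.line X H _ (h i j)).add_const ((D H).val i j)
  rw [zero_add] at h1
  refine h1.congr' ?_
  filter_upwards [self_mem_nhdsWithin] with t ht
  have ht' : t ≠ 0 := ht
  rw [add_sub_cancel_left, hD.map_smul]
  simp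
  field_simp
  ring

lemma secV_line {n : ℕ} {x : Fin n → ℝ} {G D : (Fin n → ℝ) → (Fin n → ℝ)} (hD : IsLinearMap ℝ D)
    (h : ∀ i, (fun z => (G z - G x - D (z - x)) i) =o[𝓝 x] (fun z => nrm ipV (z - x)))
    (w : Fin n → ℝ) (i : Fin n) :
    Tendsto (fun t : ℝ => t⁻¹ * (G (x + t • w) i - G x i)) (𝓝[≠] 0) (𝓝 (D w i)) := by
  have h1 := (ipV_good.line x w _ (h i)).add_const (D w i)
  rw [zero_add] at h1
  refine h1.congr' ?_
  filter_upwards [self_mem_nhdsWithin] with t ht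
  have ht' : t ≠ 0 := ht
  rw [add_sub_cancel_left, hD.map_smul]
  simp
  field_simp
  ring

/-- uniqueness of second derivative -/
lemma secondM_unique {n : ℕ} {f : Sym n → EReal} {X : Sym n} {G D G' D' : Sym n → Sym n}
    (h : HasSecondDerivAt ipM f X G D) (h' : HasSecondDerivAt ipM f X G' D') : D = D' := by
  obtain ⟨V, hV, fr, hfr, hG, hD, hs⟩ := h
  obtain ⟨V', hV', fr', hfr', hG', hD', hs'⟩ := h'
  rw [secM_iff X G D hD] at hs
  rw [secM_iff X G' D' hD'] at hs'
  have hGG : G =ᶠ[𝓝 X] G' := by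
    have e : ∀ᶠ Z in 𝓝 X, fr Z = fr' Z := by
      filter_upwards [hV, hV'] with Z h1 h2
      have := (hfr Z h1).symm.trans (hfr' Z h2)
      exact_mod_cast this
    filter_upwards [e.eventually_nhds, hV, hV'] with Z h0 h1 h2
    exact ipM_good.grad_unique (hG Z h1) (hG' Z h2) h0
  funext H
  apply Subtype.ext
  ext i j
  refine tendsto_nhds_unique ((secM_line hD hs H i j).congr' ?_) (secM_line hD' hs' H i j)
  filter_upwards [(tendsto_line X H).eventually hGG] with t ht
  rw [ht, hGG.eq_of_nhds]


end Part2

section Part3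

lemma lo_sum {α : Type*} {l : Filter α} {n : ℕ} {F : Fin n → α → ℝ} {g : α → ℝ}
    (h : ∀ k, F k =o[l] g) : (fun z => ∑ k, F k z) =o[l] g := by
  have := Asymptotics.IsLittleO.sum (s := Finset.univ) (fun k _ => h k)
  refine this.congr_left fun z => ?_
  simp

lemma bo_sum {α : Type*} {l : Filter α} {n : ℕ} {F : Fin n → α → ℝ} {g : α → ℝ}
    (h : ∀ k, F k =O[l] g) : (fun z => ∑ k, F k z) =O[l] g := by
  have := Asymptotics.IsBigO.sum (s := Finset.univ) (fun k _ => h k)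
  refine this.congr_left fun z => ?_
  simp

lemma aeval_conj {n : ℕ} {W : Matrix (Fin n) (Fin n) ℝ} (h1 : W * Wᵀ = 1) (x : Fin n → ℝ)
    (p : Polynomial ℝ) :
    Polynomial.aeval (W * diagonal x * Wᵀ) p = W * diagonal (fun k => p.eval (x k)) * Wᵀ := by
  have h3 : Wᵀ * W = 1 := mul_eq_one_comm.mp h1
  induction p using Polynomial.induction_on with
  | C a =>
    simp only [Polynomial.aeval_C, Polynomial.eval_C]
    have : (diagonal (fun _ : Fin n => a)) = a • (1 : Matrix (Fin n) (Fin n) ℝ) := by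
      ext i j; simp [Matrix.diagonal_apply, Matrix.one_apply]
    rw [this, Matrix.mul_smul, Matrix.mul_one, Matrix.smul_mul, h1, Algebra.algebraMap_eq_smul_one]
  | add p q hp hq =>
    rw [map_add, hp, hq, ← Matrix.add_mul, ← Matrix.mul_add, Matrix.diagonal_add]
    simp
  | monomial m a ih =>
    rw [pow_succ, ← mul_assoc, map_mul (Polynomial.aeval _) (_ * _) Polynomial.X, ih,
      Polynomial.aeval_X]
    generalize Polynomial.C a * Polynomial.X ^ m = p
    have e1 : W * diagonal (fun k => p.eval (x k)) * Wᵀ * (W * diagonal x * Wᵀ)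
        = W * diagonal (fun k => p.eval (x k)) * (Wᵀ * W) * diagonal x * Wᵀ := by
      simp only [Matrix.mul_assoc]
    rw [e1, h3, Matrix.mul_one, Matrix.mul_assoc W, Matrix.diagonal_mul_diagonal]
    simp only [Polynomial.eval_mul, Polynomial.eval_X]

lemma aeval_orth {n : ℕ} {Z W : Matrix (Fin n) (Fin n) ℝ} (hW : W ∈ eigOrth Z)
    (p : Polynomial ℝ) :
    Polynomial.aeval Z p = W * diagonal (fun k => p.eval (eigval Z k)) * Wᵀ := by
  conv_lhs => rw [hW.2]
  exact aeval_conj hW.1 _ p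

/-- divided difference -/
def dd (p : Polynomial ℝ) (a b : ℝ) : ℝ :=
  if a = b then p.derivative.eval a else (p.eval a - p.eval b) / (a - b)

lemma dd_mul_X (p : Polynomial ℝ) (a b : ℝ) :
    dd (p * Polynomial.X) a b = dd p a b * b + p.eval a := by
  unfold dd
  split_ifs with h
  · subst h; simp
  · have : a - b ≠ 0 := sub_ne_zero.mpr h
    simp
    field_simp
    ring

/-- Hadamard multiplier in the eigenbasis. -/
def Lw {n : ℕ} (U : Matrix (Fin n) (Fin n) ℝ) (c : Fin n → Fin n → ℝ)
    (H : Matrix (Fin n) (Fin n) ℝ) : Matrix (Fin n) (Fin n) ℝ :=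
  U * (Matrix.of fun i j => c i j * (Uᵀ * H * U) i j) * Uᵀ

lemma Lw_step {n : ℕ} {X U : Matrix (Fin n) (Fin n) ℝ} (hU : U ∈ eigOrth X) (p : Polynomial ℝ)
    (H : Matrix (Fin n) (Fin n) ℝ) :
    Lw U (fun i j => dd (p * Polynomial.X) (eigval X i) (eigval X j)) H =
      Lw U (fun i j => dd p (eigval X i) (eigval X j)) H * X + Polynomial.aeval X p * H := by
  rw [aeval_orth hU]
  obtain ⟨h1, h2⟩ := hU
  have h3 : Uᵀ * U = 1 := mul_eq_one_comm.mp h1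
  have hH : H = U * (Uᵀ * H * U) * Uᵀ := by
    calc H = (U * Uᵀ) * H * (U * Uᵀ) := by simp [h1]
      _ = _ := by simp only [Matrix.mul_assoc]
  unfold Lw
  set K := Uᵀ * H * U with hK
  set x := eigval X with hx
  rw [h2, hH]
  have e1 : ∀ M : Matrix (Fin n) (Fin n) ℝ, U * M * Uᵀ * (U * diagonal x * Uᵀ) =
      U * (M * diagonal x) * Uᵀ := by
    intro M
    calc _ = U * M * (Uᵀ * U) * diagonal x * Uᵀ := by simp only [Matrix.mul_assoc]
      _ = _ := by rw [h3]; simp only [Matrix.mul_assoc, Matrix.one_mul]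
  have e2 : ∀ d, U * diagonal d * Uᵀ * (U * K * Uᵀ) = U * (diagonal d * K) * Uᵀ := by
    intro d
    calc _ = U * diagonal d * (Uᵀ * U) * K * Uᵀ := by simp only [Matrix.mul_assoc]
      _ = _ := by rw [h3]; simp only [Matrix.mul_assoc, Matrix.one_mul]
  rw [e1, e2, ← Matrix.add_mul, ← Matrix.mul_add]
  congr 2
  ext i j
  simp only [Matrix.of_apply, Matrix.add_apply, Matrix.mul_diagonal, Matrix.diagonal_mul, dd_mul_X]
  ring

lemma Lw_add {n : ℕ} (U : Matrix (Fin n) (Fin n) ℝ) (c : Fin n → Fin n → ℝ)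
    (H K : Matrix (Fin n) (Fin n) ℝ) : Lw U c (H + K) = Lw U c H + Lw U c K := by
  unfold Lw
  rw [← Matrix.add_mul, ← Matrix.mul_add]
  congr 2
  ext i j
  simp [Matrix.add_mul, mul_add, -Matrix.mul_apply, Matrix.mul_add]

lemma Lw_smul {n : ℕ} (U : Matrix (Fin n) (Fin n) ℝ) (c : Fin n → Fin n → ℝ)
    (t : ℝ) (K : Matrix (Fin n) (Fin n) ℝ) : Lw U c (t • K) = t • Lw U c K := by
  unfold Lw
  rw [← Matrix.smul_mul, ← Matrix.mul_smul]
  congr 2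
  ext i j
  simp
  ring

lemma Lw_add_coef {n : ℕ} (U : Matrix (Fin n) (Fin n) ℝ) (c d : Fin n → Fin n → ℝ)
    (H : Matrix (Fin n) (Fin n) ℝ) :
    Lw U (fun i j => c i j + d i j) H = Lw U c H + Lw U d H := by
  unfold Lw
  rw [← Matrix.add_mul, ← Matrix.mul_add]
  congr 2
  ext i j
  simp [add_mul]

section Exp
variable {n : ℕ} (X : Sym n)

lemma poly_exp {U : Matrix (Fin n) (Fin n) ℝ} (hU : U ∈ eigOrth X.val) (p : Polynomial ℝ) :
    ∀ i j, (fun Z : Sym n => (Polynomial.aeval Z.val p - Polynomial.aeval X.val p -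
      Lw U (fun i j => dd p (eigval X.val i) (eigval X.val j)) (Z.val - X.val)) i j)
        =o[𝓝 X] (fun Z => nrm ipM (Z - X)) := by
  induction p using Polynomial.induction_on with
  | C a =>
    intro i j
    have : ∀ Z : Sym n, (Polynomial.aeval Z.val (Polynomial.C a) -
      Polynomial.aeval X.val (Polynomial.C a) -
      Lw U (fun i j => dd (Polynomial.C a) (eigval X.val i) (eigval X.val j)) (Z.val - X.val)) i j
        = 0 := by
      intro Z
      have h0 : (fun i j => dd (Polynomial.C a) (eigval X.val i) (eigval X.val j)) =
          fun _ _ => 0 := by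
        ext i j; simp [dd]
      have h1 : (Matrix.of fun i j => (0 : ℝ) * (Uᵀ * (Z.val - X.val) * U) i j) = 0 := by
        ext i j; simp
      rw [h0, Lw, h1]
      simp
    simp only [this]
    exact Asymptotics.isLittleO_zero _ _
  | add p q hp hq =>
    intro i j
    refine ((hp i j).add (hq i j)).congr_left fun Z => ?_
    have : (fun i j => dd (p + q) (eigval X.val i) (eigval X.val j)) = fun i j =>
        dd p (eigval X.val i) (eigval X.val j) + dd q (eigval X.val i) (eigval X.val j) := by
      ext i j
      unfold dd
      split_ifs
      · simp
      · simp; ring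
    rw [this, Lw_add_coef]
    simp
    ring
  | monomial m a ih =>
    intro i j
    rw [pow_succ, ← mul_assoc]
    set p := Polynomial.C a * Polynomial.X ^ m
    have hc : Continuous (fun Z : Sym n => Polynomial.aeval Z.val p) := by
      have h1 : Continuous (fun Z : Sym n => Z.val) := continuous_subtype_val
      exact (Polynomial.continuous_aeval p).comp h1
    have key : ∀ Z : Sym n, (Polynomial.aeval Z.val (p * Polynomial.X) -
        Polynomial.aeval X.val (p * Polynomial.X) -
        Lw U (fun i j => dd (p * Polynomial.X) (eigval X.val i) (eigval X.val j))
          (Z.val - X.val)) =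
        (Polynomial.aeval Z.val p - Polynomial.aeval X.val p -
          Lw U (fun i j => dd p (eigval X.val i) (eigval X.val j)) (Z.val - X.val)) * X.val +
        (Polynomial.aeval Z.val p - Polynomial.aeval X.val p) * (Z.val - X.val) := by
      intro Z
      rw [Lw_step hU, map_mul (Polynomial.aeval Z.val) p, map_mul (Polynomial.aeval X.val) p,
        Polynomial.aeval_X, Polynomial.aeval_X]
      noncomm_ring
    simp only [key, Matrix.add_apply]
    refine Asymptotics.IsLittleO.add ?_ ?_
    · simp only [Matrix.mul_apply (M := _ - _ - _)]
      refine lo_sum fun k => ?_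
      refine ((ih i k).const_mul_left (X.val k j)).congr_left fun Z => ?_
      ring
    · simp only [Matrix.mul_apply (M := _ - _)]
      refine lo_sum fun k => ?_
      have h1 : (fun Z : Sym n => (Polynomial.aeval Z.val p - Polynomial.aeval X.val p) i k)
          =o[𝓝 X] (fun _ => (1 : ℝ)) := by
        rw [Asymptotics.isLittleO_one_iff]
        have := ((hc.matrix_elem i k).tendsto X).sub_const (Polynomial.aeval X.val p i k)
        simpa using this
      have h2 : (fun Z : Sym n => (Z.val - X.val) k j) =O[𝓝 X] (fun Z => nrm ipM (Z - X)) := by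
        refine Asymptotics.IsBigO.of_bound 1 (Eventually.of_forall fun Z => ?_)
        rw [one_mul, Real.norm_of_nonneg (nrm_nonneg ipM (Z - X))]
        exact entry_le_nrm (Z - X) k j
      simpa using h1.mul_isBigO h2

lemma orth_abs_le {V : Matrix (Fin n) (Fin n) ℝ} (hV : V * Vᵀ = 1) (i k : Fin n) : |V i k| ≤ 1 := by
  have h : ∑ k, V i k * V i k = 1 := by
    have := congrFun (congrFun hV i) i
    simpa [Matrix.mul_apply] using this
  have h2 : V i k * V i k ≤ 1 := by
    rw [← h]
    exact Finset.single_le_sum (f := fun l => V i l * V i l)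
      (fun l _ => mul_self_nonneg _) (Finset.mem_univ k)
  exact abs_le_one_iff_mul_self_le_one.mpr h2

lemma conj_small (V : Sym n → Matrix (Fin n) (Fin n) ℝ) (hV : ∀ Z, V Z ∈ eigOrth Z.val)
    (r : Sym n → Fin n → ℝ) (g : Sym n → ℝ) (hr : ∀ k, (fun Z => r Z k) =o[𝓝 X] g) (i j : Fin n) :
    (fun Z => (V Z * diagonal (r Z) * (V Z)ᵀ) i j) =o[𝓝 X] g := by
  simp only [conj_diag_apply]
  refine lo_sum fun k => ?_
  refine Asymptotics.IsBigO.trans_isLittleO ?_ (hr k)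
  refine Asymptotics.IsBigO.of_bound 1 (Eventually.of_forall fun Z => ?_)
  simp only [Real.norm_eq_abs, abs_mul, one_mul]
  have h1 := orth_abs_le (hV Z).1 i k
  have h2 := orth_abs_le (hV Z).1 j k
  calc |V Z i k| * |r Z k| * |V Z j k| ≤ 1 * |r Z k| * 1 := by gcongr
    _ = _ := by ring

lemma poly_scalar (p : Polynomial ℝ) (k : Fin n) :
    (fun Z : Sym n => p.eval (eigval Z.val k) - p.eval (eigval X.val k) -
      p.derivative.eval (eigval X.val k) * (eigval Z.val k - eigval X.val k))
      =o[𝓝 X] (fun Z => nrm ipM (Z - X)) := by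
  have h1 := (p.hasDerivAt (eigval X.val k)).isLittleO
  have h2 : Tendsto (fun Z : Sym n => eigval Z.val k) (𝓝 X) (𝓝 (eigval X.val k)) :=
    ((continuous_apply k).comp continuous_eigval).tendsto X
  refine ((h1.comp_tendsto h2).trans_isBigO (eigval_isBigO X k)).congr_left fun Z => ?_
  simp
  ring

lemma trace_conj {U M : Matrix (Fin n) (Fin n) ℝ} (hU : U * Uᵀ = 1) :
    (U * M * Uᵀ).trace = M.trace := by
  rw [Matrix.trace_mul_comm, ← Matrix.mul_assoc, mul_eq_one_comm.mp hU, Matrix.one_mul]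

/-- block sums of eigenvalues are differentiable -/
lemma sum_exp {U : Matrix (Fin n) (Fin n) ℝ} (hU : U ∈ eigOrth X.val) (c : Fin n → ℝ)
    (hc : ∀ i j, eigval X.val i = eigval X.val j → c i = c j) :
    (fun Z : Sym n => ∑ k, c k * (eigval Z.val k - eigval X.val k) -
      ∑ k, c k * (Uᵀ * (Z.val - X.val) * U) k k) =o[𝓝 X] (fun Z => nrm ipM (Z - X)) := by
  obtain ⟨p, hp⟩ := hermite (eigval X.val) (fun _ => 0) c (fun i j h => ⟨rfl, hc i j h⟩)
  have h1 : (fun Z : Sym n => ∑ i, (Polynomial.aeval Z.val p - Polynomial.aeval X.val p -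
      Lw U (fun i j => dd p (eigval X.val i) (eigval X.val j)) (Z.val - X.val)) i i)
        =o[𝓝 X] (fun Z => nrm ipM (Z - X)) :=
    lo_sum fun i => poly_exp X hU p i i
  have h2 : (fun Z : Sym n => ∑ k, (p.eval (eigval Z.val k) - p.eval (eigval X.val k) -
      p.derivative.eval (eigval X.val k) * (eigval Z.val k - eigval X.val k)))
      =o[𝓝 X] (fun Z => nrm ipM (Z - X)) :=
    lo_sum fun i => poly_scalar X p i
  refine (h1.sub h2).congr_left fun Z => ?_
  obtain ⟨W, hW⟩ := eigOrth_nonempty (isHerm_sym Z)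
  have e1 : ∑ i, (Polynomial.aeval Z.val p - Polynomial.aeval X.val p -
      Lw U (fun i j => dd p (eigval X.val i) (eigval X.val j)) (Z.val - X.val)) i i =
      (Polynomial.aeval Z.val p).trace - (Polynomial.aeval X.val p).trace -
      (Lw U (fun i j => dd p (eigval X.val i) (eigval X.val j)) (Z.val - X.val)).trace := by
    rw [← Matrix.trace_sub, ← Matrix.trace_sub]; rfl
  rw [e1, aeval_orth hW, aeval_orth hU, trace_conj hW.1, trace_conj hU.1, Lw, trace_conj hU.1]
  simp only [Matrix.trace_diagonal]
  simp only [Matrix.trace, Matrix.diag, Matrix.of_apply, dd, if_true, (hp _).1, (hp _).2,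
    Finset.sum_sub_distrib]
  ring

/-- coefficient matrix -/
def ddm (x y b : Fin n → ℝ) (i j : Fin n) : ℝ :=
  if x i = x j then b i else (y i - y j) / (x i - x j)

lemma spec_expand {U : Matrix (Fin n) (Fin n) ℝ} (hU : U ∈ eigOrth X.val)
    (V : Sym n → Matrix (Fin n) (Fin n) ℝ) (hV : ∀ Z, V Z ∈ eigOrth Z.val) (y b : Fin n → ℝ)
    (hy : ∀ i j, eigval X.val i = eigval X.val j → y i = y j)
    (hb : ∀ i j, eigval X.val i = eigval X.val j → b i = b j) (i j : Fin n) :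
    (fun Z : Sym n => (V Z * diagonal (fun k => y k + b k * (eigval Z.val k - eigval X.val k)) *
        (V Z)ᵀ - U * diagonal y * Uᵀ - Lw U (ddm (eigval X.val) y b) (Z.val - X.val)) i j)
      =o[𝓝 X] (fun Z => nrm ipM (Z - X)) := by
  obtain ⟨p, hp⟩ := hermite (eigval X.val) y b (fun i j h => ⟨hy i j h, hb i j h⟩)
  have h1 := poly_exp X hU p i j
  have h2 := conj_small X V hV (fun Z k => p.eval (eigval Z.val k) - p.eval (eigval X.val k) -
      p.derivative.eval (eigval X.val k) * (eigval Z.val k - eigval X.val k)) _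
      (fun k => poly_scalar X p k) i j
  refine (h1.sub h2).congr_left fun Z => ?_
  have e1 : (fun i j => dd p (eigval X.val i) (eigval X.val j)) = ddm (eigval X.val) y b := by
    ext i j
    simp only [dd, ddm, (hp _).1, (hp _).2]
  rw [e1, aeval_orth (hV Z), aeval_orth hU]
  simp only [(hp _).1, (hp _).2, Matrix.sub_apply, conj_diag_apply]
  rw [show ∀ a b c d : ℝ, a - b - c - d = (a - d) - b - c by intros; ring,
    ← Finset.sum_sub_distrib]
  congr 2
  exact Finset.sum_congr rfl fun k _ => by ring

lemma spec_cont {U : Matrix (Fin n) (Fin n) ℝ} (hU : U ∈ eigOrth X.val)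
    (V : Sym n → Matrix (Fin n) (Fin n) ℝ) (hV : ∀ Z, V Z ∈ eigOrth Z.val) (c : Fin n → ℝ)
    (hc : ∀ i j, eigval X.val i = eigval X.val j → c i = c j) (i j : Fin n) :
    (fun Z : Sym n => (V Z * diagonal c * (V Z)ᵀ - U * diagonal c * Uᵀ) i j)
      =o[𝓝 X] (fun _ => (1 : ℝ)) := by
  obtain ⟨p, hp⟩ := hermite (eigval X.val) c (fun _ => 0) (fun i j h => ⟨hc i j h, rfl⟩)
  have hcont : Continuous (fun Z : Sym n => Polynomial.aeval Z.val p) := by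
    have h1 : Continuous (fun Z : Sym n => Z.val) := continuous_subtype_val
    exact (Polynomial.continuous_aeval p).comp h1
  have h1 : (fun Z : Sym n => (Polynomial.aeval Z.val p - Polynomial.aeval X.val p) i j)
      =o[𝓝 X] (fun _ => (1 : ℝ)) := by
    rw [Asymptotics.isLittleO_one_iff]
    have := ((hcont.matrix_elem i j).tendsto X).sub_const (Polynomial.aeval X.val p i j)
    simpa using this
  have h2 := conj_small X V hV (fun Z k => p.eval (eigval Z.val k) - c k) (fun _ => (1 : ℝ))
    (fun k => by
      rw [Asymptotics.isLittleO_one_iff]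
      have h2 : Continuous (fun Z : Sym n => p.eval (eigval Z.val k)) :=
        p.continuous.comp ((continuous_apply k).comp continuous_eigval)
      have := (h2.tendsto X).sub_const (c k)
      simpa [(hp k).1] using this) i j
  refine (h1.sub h2).congr_left fun Z => ?_
  rw [aeval_orth (hV Z), aeval_orth hU]
  simp only [(hp _).1, Matrix.sub_apply, conj_diag_apply]
  rw [show ∀ a b d : ℝ, a - b - d = (a - d) - b by intros; ring,
    ← Finset.sum_sub_distrib]
  congr 1
  exact Finset.sum_congr rfl fun k _ => by ring

lemma hat_isBigO {U : Matrix (Fin n) (Fin n) ℝ} (i j : Fin n) :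
    (fun Z : Sym n => (Uᵀ * (Z.val - X.val) * U) i j) =O[𝓝 X] (fun Z => nrm ipM (Z - X)) := by
  simp only [Matrix.mul_apply, Finset.sum_mul]
  refine bo_sum fun k => bo_sum fun l => ?_
  have h2 : (fun Z : Sym n => (Z.val - X.val) l k) =O[𝓝 X] (fun Z => nrm ipM (Z - X)) := by
    refine Asymptotics.IsBigO.of_bound 1 (Eventually.of_forall fun Z => ?_)
    rw [one_mul, Real.norm_of_nonneg (nrm_nonneg ipM (Z - X))]
    exact entry_le_nrm (Z - X) l k
  refine (h2.const_mul_left (Uᵀ i l * U k j)).congr_left fun Z => ?_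
  ring

/-- the second derivative map (matrix level) -/
def Dmat (U : Matrix (Fin n) (Fin n) ℝ) (x y b : Fin n → ℝ) (a : Fin n → Fin n → ℝ)
    (H : Matrix (Fin n) (Fin n) ℝ) : Matrix (Fin n) (Fin n) ℝ :=
  Lw U (ddm x y b) H + U * diagonal (fun k => ∑ j, a k j * (Uᵀ * H * U) j j) * Uᵀ

lemma second_expand {U : Matrix (Fin n) (Fin n) ℝ} (hU : U ∈ eigOrth X.val)
    (V : Sym n → Matrix (Fin n) (Fin n) ℝ) (hV : ∀ Z, V Z ∈ eigOrth Z.val) (y b : Fin n → ℝ)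
    (a : Fin n → Fin n → ℝ) (q : Sym n → Fin n → ℝ)
    (hy : ∀ i j, eigval X.val i = eigval X.val j → y i = y j)
    (hb : ∀ i j, eigval X.val i = eigval X.val j → b i = b j)
    (ha : ∀ i j k, eigval X.val i = eigval X.val j → a i k = a j k)
    (ha' : ∀ i j k, eigval X.val i = eigval X.val j → a k i = a k j)
    (hq : ∀ k, (fun Z : Sym n => q Z k - y k - (b k * (eigval Z.val k - eigval X.val k) +
      ∑ j, a k j * (eigval Z.val j - eigval X.val j))) =o[𝓝 X] (fun Z => nrm ipM (Z - X)))
    (i j : Fin n) :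
    (fun Z : Sym n => (V Z * diagonal (q Z) * (V Z)ᵀ - U * diagonal y * Uᵀ -
      Dmat U (eigval X.val) y b a (Z.val - X.val)) i j) =o[𝓝 X] (fun Z => nrm ipM (Z - X)) := by
  have h1 := spec_expand X hU V hV y b hy hb i j
  have h2 := conj_small X V hV (fun Z k =>
    (q Z k - y k - (b k * (eigval Z.val k - eigval X.val k) +
      ∑ j, a k j * (eigval Z.val j - eigval X.val j))) +
    (∑ j, a k j * (eigval Z.val j - eigval X.val j) -
      ∑ j, a k j * (Uᵀ * (Z.val - X.val) * U) j j)) _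
      (fun k => (hq k).add (sum_exp X hU (a k) (fun i j h => ha' i j k h))) i j
  have h3 : (fun Z : Sym n => ∑ l, (V Z * diagonal (fun k => a k l) * (V Z)ᵀ -
      U * diagonal (fun k => a k l) * Uᵀ) i j * (Uᵀ * (Z.val - X.val) * U) l l)
      =o[𝓝 X] (fun Z => nrm ipM (Z - X)) := by
    refine lo_sum fun l => ?_
    simpa using (spec_cont X hU V hV (fun k => a k l) (fun i j h => ha i j l h) i j).mul_isBigO
      (hat_isBigO X (U := U) l l)
  refine ((h1.add h2).add h3).congr_left fun Z => ?_
  simp only [Dmat, Matrix.sub_apply, Matrix.add_apply, conj_diag_apply, sub_mul,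
    Finset.sum_sub_distrib]
  have e : ∀ W : Matrix (Fin n) (Fin n) ℝ, ∑ l, (∑ k, W i k * a k l * W j k) *
      (Uᵀ * (Z.val - X.val) * U) l l =
      ∑ k, W i k * (∑ l, a k l * (Uᵀ * (Z.val - X.val) * U) l l) * W j k := by
    intro W
    simp only [Finset.sum_mul, Finset.mul_sum]
    rw [Finset.sum_comm]
    exact Finset.sum_congr rfl fun k _ => Finset.sum_congr rfl fun l _ => by ring
  rw [e, e]
  have e2 : ∀ p q r s t u v : ℝ, p + q + s = t + u → p - r - v + q + (s - u) = t - r - (v) := by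
    intros; linarith
  have e3 : ∑ x, V Z i x * (y x + b x * (eigval Z.val x - eigval X.val x)) * V Z j x +
      ∑ x, V Z i x * (q Z x - y x - (b x * (eigval Z.val x - eigval X.val x) +
        ∑ j, a x j * (eigval Z.val j - eigval X.val j)) +
        (∑ j, a x j * (eigval Z.val j - eigval X.val j) -
          ∑ j, a x j * (Uᵀ * (Z.val - X.val) * U) j j)) * V Z j x +
      ∑ k, V Z i k * (∑ l, a k l * (Uᵀ * (Z.val - X.val) * U) l l) * V Z j k =
      ∑ k, V Z i k * q Z k * V Z j k := by
    rw [← Finset.sum_add_distrib, ← Finset.sum_add_distrib]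
    exact Finset.sum_congr rfl fun k _ => by ring
  rw [← e3]
  ring

end Exp

end Part3

section Part4

lemma t_struct {n : ℕ} (x : Fin n → ℝ) (T : Fin n → Fin n → ℝ)
    (hT : ∀ i i', x i = x i' → ∀ k l, T (Equiv.swap i i' k) (Equiv.swap i i' l) = T k l) :
    ∃ (b : Fin n → ℝ) (a : Fin n → Fin n → ℝ),
      (∀ i j, T i j = (if i = j then b i else 0) + a i j) ∧
      (∀ i j, x i = x j → b i = b j) ∧
      (∀ i j k, x i = x j → a i k = a j k) ∧ (∀ i j k, x i = x j → a k i = a k j) := by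
  classical
  have m1 : ∀ i i' j, x i = x i' → j ≠ i → j ≠ i' → T i j = T i' j := by
    intro i i' j h h1 h2
    have := hT i i' h i j
    rw [Equiv.swap_apply_left, Equiv.swap_apply_of_ne_of_ne h1 h2] at this
    exact this.symm
  have m2 : ∀ i j j', x j = x j' → i ≠ j → i ≠ j' → T i j = T i j' := by
    intro i j j' h h1 h2
    have := hT j j' h i j
    rw [Equiv.swap_apply_left, Equiv.swap_apply_of_ne_of_ne h1 h2] at this
    exact this.symm
  have off : ∀ i j i' j', i ≠ j → i' ≠ j' → x i = x i' → x j = x j' → T i j = T i' j' := by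
    intro i j i' j' hij hij' hi hj
    by_cases h1 : i' = j
    · by_cases h2 : j' = i
      · have hx : x i = x j := by rw [hi, h1]
        have := hT i j hx i j
        rw [Equiv.swap_apply_left, Equiv.swap_apply_right] at this
        rw [h1, h2]; exact this.symm
      · rw [m2 i j j' hj hij (Ne.symm h2), m1 i i' j' hi h2 (Ne.symm hij')]
    · rw [m1 i i' j hi (Ne.symm hij) (Ne.symm h1), m2 i' j j' hj h1 hij']
  let A : ℝ → ℝ → ℝ := fun u v =>
    if h : ∃ p : Fin n × Fin n, p.1 ≠ p.2 ∧ x p.1 = u ∧ x p.2 = v then T h.choose.1 h.choose.2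
    else 0
  have hA : ∀ i j, i ≠ j → A (x i) (x j) = T i j := by
    intro i j hij
    have h : ∃ p : Fin n × Fin n, p.1 ≠ p.2 ∧ x p.1 = x i ∧ x p.2 = x j := ⟨(i, j), hij, rfl, rfl⟩
    simp only [A]
    rw [dif_pos h]
    obtain ⟨h1, h2, h3⟩ := h.choose_spec
    exact off _ _ _ _ h1 hij h2 h3
  refine ⟨fun i => T i i - A (x i) (x i), fun i j => A (x i) (x j), ?_, ?_, ?_, ?_⟩
  · intro i j
    by_cases hij : i = j
    · subst hij; simp
    · simp [hij, hA i j hij]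
  · intro i j hij
    have := hT i j hij i i
    rw [Equiv.swap_apply_left] at this
    simp only [hij, this]
  · intro i j k h; simp only [h]
  · intro i j k h; simp only [h]

lemma pinv_eq {n : ℕ} (A B : Matrix (Fin n) (Fin n) ℝ) (h1 : A * B * A = A) (h2 : B * A * B = B)
    (h3 : (A * B)ᵀ = A * B) (h4 : (B * A)ᵀ = B * A) : pinv A = B := by
  have hex : ∃ B : Matrix (Fin n) (Fin n) ℝ,
      A * B * A = A ∧ B * A * B = B ∧ (A * B)ᵀ = A * B ∧ (B * A)ᵀ = B * A := ⟨B, h1, h2, h3, h4⟩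
  unfold pinv
  rw [dif_pos hex]
  obtain ⟨c1, c2, c3, c4⟩ := hex.choose_spec
  set C := hex.choose
  have e1 : A * B = A * C := by
    calc A * B = (A * B)ᵀ := h3.symm
      _ = ((A * C) * (A * B))ᵀ := by
          rw [← Matrix.mul_assoc, c1]
      _ = (A * B) * (A * C) := by rw [Matrix.transpose_mul, h3, c3]
      _ = A * C := by rw [← Matrix.mul_assoc, h1]
  have e2 : B * A = C * A := by
    calc B * A = (B * A)ᵀ := h4.symm
      _ = ((B * A) * (C * A))ᵀ := by
          rw [Matrix.mul_assoc, ← Matrix.mul_assoc A C A, c1]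
      _ = (C * A) * (B * A) := by rw [Matrix.transpose_mul, h4, c4]
      _ = C * A := by rw [Matrix.mul_assoc, ← Matrix.mul_assoc A B A, h1]
  calc C = C * A * C := c2.symm
    _ = B * A * B := by rw [← e2, Matrix.mul_assoc, ← e1, ← Matrix.mul_assoc]
    _ = B := h2

lemma pinv_orth {n : ℕ} {X U : Matrix (Fin n) (Fin n) ℝ} (hU : U ∈ eigOrth X) (μ : ℝ) :
    pinv (μ • (1 : Matrix (Fin n) (Fin n) ℝ) - X) =
      U * diagonal (fun j => (μ - eigval X j)⁻¹) * Uᵀ := by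
  obtain ⟨h1, h2⟩ := hU
  have h3 : Uᵀ * U = 1 := mul_eq_one_comm.mp h1
  set x := eigval X
  have hA : μ • (1 : Matrix (Fin n) (Fin n) ℝ) - X = U * diagonal (fun j => μ - x j) * Uᵀ := by
    have : diagonal (fun j => μ - x j) = μ • (1 : Matrix (Fin n) (Fin n) ℝ) - diagonal x := by
      ext i j; simp [Matrix.diagonal_apply, Matrix.one_apply]; split_ifs <;> simp
    rw [this, Matrix.mul_sub, Matrix.sub_mul, ← h2, Matrix.mul_smul, Matrix.smul_mul,
      Matrix.mul_one, h1]
  have hm : ∀ d e : Fin n → ℝ, (U * diagonal d * Uᵀ) * (U * diagonal e * Uᵀ) =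
      U * diagonal (fun j => d j * e j) * Uᵀ := by
    intro d e
    have e1 : (U * diagonal d * Uᵀ) * (U * diagonal e * Uᵀ) =
        U * diagonal d * (Uᵀ * U) * diagonal e * Uᵀ := by simp only [Matrix.mul_assoc]
    rw [e1, h3, Matrix.mul_one, Matrix.mul_assoc U, Matrix.diagonal_mul_diagonal]
  have ht : ∀ d : Fin n → ℝ, (U * diagonal d * Uᵀ)ᵀ = U * diagonal d * Uᵀ := by
    intro d
    simp [Matrix.transpose_mul, Matrix.mul_assoc]
  rw [hA]
  apply pinv_eq
  · have this : (fun j => (μ - x j) * (μ - x j)⁻¹ * (μ - x j)) = fun j => μ - x j := by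
      ext j
      by_cases h : μ - x j = 0
      · simp [h]
      · field_simp
    rw [hm, hm, this]
  · have this : (fun j => (μ - x j)⁻¹ * (μ - x j) * (μ - x j)⁻¹) = fun j => (μ - x j)⁻¹ := by
      ext j
      by_cases h : μ - x j = 0
      · simp [h]
      · field_simp
    rw [hm, hm, this]
  · rw [hm, ht]
  · rw [hm, ht]

lemma eig_sum {m : ℕ} {B : Matrix (Fin m) (Fin m) ℝ} (hB : B.IsHermitian) :
    ∑ a, eigval B a = ∑ a, B a a := by
  obtain ⟨W, hW⟩ := eigOrth_nonempty hB
  have : B.trace = ∑ a, eigval B a := by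
    conv_lhs => rw [hW.2, trace_conj hW.1, Matrix.trace_diagonal]
  rw [← this]; rfl

lemma eig_sq_sum {m : ℕ} {B : Matrix (Fin m) (Fin m) ℝ} (hB : B.IsHermitian) :
    ∑ a, eigval B a ^ 2 = ∑ a, ∑ b, B a b ^ 2 := by
  obtain ⟨W, hW⟩ := eigOrth_nonempty hB
  have h := aeval_orth hW (Polynomial.X ^ 2)
  simp only [map_pow, Polynomial.aeval_X, Polynomial.eval_pow, Polynomial.eval_X] at h
  have h2 := congrArg Matrix.trace h
  rw [trace_conj hW.1, Matrix.trace_diagonal] at h2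
  rw [← h2, sq]
  simp only [Matrix.trace, Matrix.diag, Matrix.mul_apply]
  refine Finset.sum_congr rfl fun a _ => Finset.sum_congr rfl fun b _ => ?_
  have : B b a = B a b := by
    have := hB.apply a b
    simpa using this
  rw [this, sq]

lemma lam_block {n : ℕ} (X U H : Matrix (Fin n) (Fin n) ℝ) (i k : Fin n) (hk : k ∈ blockSet X i) :
    lambdaDir X U H k = eigval (blockMat X (Uᵀ * H * U) i)
      (((blockSet X i).orderIsoOfFin rfl).symm ⟨k, hk⟩) := by
  have hs : blockSet X k = blockSet X i := by
    have : eigval X k = eigval X i := by simpa [blockSet] using hk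
    simp [blockSet, this]
  have gen : ∀ s t : Finset (Fin n), s = t → ∀ (h1 : k ∈ s) (h2 : k ∈ t),
      eigval (Matrix.of fun a b : Fin s.card => (Uᵀ * H * U) (s.orderIsoOfFin rfl a : Fin n)
        (s.orderIsoOfFin rfl b : Fin n)) ((s.orderIsoOfFin rfl).symm ⟨k, h1⟩) =
      eigval (Matrix.of fun a b : Fin t.card => (Uᵀ * H * U) (t.orderIsoOfFin rfl a : Fin n)
        (t.orderIsoOfFin rfl b : Fin n)) ((t.orderIsoOfFin rfl).symm ⟨k, h2⟩) := by
    rintro s t rfl h1 h2; rfl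
  exact gen _ _ hs (mem_blockSet_self X k) hk

lemma block_reindex {n : ℕ} (X : Matrix (Fin n) (Fin n) ℝ) (i : Fin n) (f : Fin n → ℝ) :
    ∑ k ∈ blockSet X i, f k = ∑ a, f (blockEmb X i a) := by
  rw [← Finset.sum_coe_sort]
  exact (Equiv.sum_comp ((blockSet X i).orderIsoOfFin rfl).toEquiv (fun k => f k.val)).symm

lemma lam_blockEmb {n : ℕ} (X U H : Matrix (Fin n) (Fin n) ℝ) (i : Fin n)
    (a : Fin (blockSet X i).card) :
    lambdaDir X U H (blockEmb X i a) = eigval (blockMat X (Uᵀ * H * U) i) a := by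
  have hk : blockEmb X i a ∈ blockSet X i := ((blockSet X i).orderIsoOfFin rfl a).2
  rw [lam_block X U H i _ hk]
  congr 1
  exact ((blockSet X i).orderIsoOfFin rfl).symm_apply_apply a

lemma hat_symm {n : ℕ} (U : Matrix (Fin n) (Fin n) ℝ) (H : Sym n) :
    (Uᵀ * H.val * U).IsHermitian := by
  have h : H.valᵀ = H.val := H.2
  rw [Matrix.IsHermitian, Matrix.conjTranspose_eq_transpose_of_trivial]
  simp [Matrix.transpose_mul, h, Matrix.mul_assoc]

lemma blockMat_symm {n : ℕ} (X : Matrix (Fin n) (Fin n) ℝ) {M : Matrix (Fin n) (Fin n) ℝ}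
    (hM : M.IsHermitian) (i : Fin n) : (blockMat X M i).IsHermitian := by
  ext a b
  exact hM.apply _ _

lemma sum_blocks {n : ℕ} (X : Matrix (Fin n) (Fin n) ℝ) (c f g : Fin n → ℝ)
    (hc : ∀ i j, eigval X i = eigval X j → c i = c j)
    (h : ∀ i, ∑ k ∈ blockSet X i, f k = ∑ k ∈ blockSet X i, g k) :
    ∑ k, c k * f k = ∑ k, c k * g k := by
  classical
  have fib : ∀ f : Fin n → ℝ, ∑ u ∈ Finset.univ.image (eigval X),
      ∑ k with eigval X k = u, f k = ∑ k, f k := fun f =>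
    Finset.sum_fiberwise_of_maps_to (fun k _ => Finset.mem_image_of_mem _ (Finset.mem_univ k)) f
  rw [← fib, ← fib]
  refine Finset.sum_congr rfl fun u hu => ?_
  obtain ⟨i, -, rfl⟩ := Finset.mem_image.mp hu
  have hb : (Finset.univ.filter fun k => eigval X k = eigval X i) = blockSet X i := by
    ext k; simp [blockSet]
  rw [hb]
  have e : ∀ f : Fin n → ℝ, ∑ k ∈ blockSet X i, c k * f k = c i * ∑ k ∈ blockSet X i, f k := by
    intro f
    rw [Finset.mul_sum]
    refine Finset.sum_congr rfl fun k hk => ?_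
    rw [hc k i (by simpa [blockSet] using hk)]
  rw [e, e, h]

lemma lam_sum {n : ℕ} (X : Matrix (Fin n) (Fin n) ℝ) (U : Matrix (Fin n) (Fin n) ℝ) (H : Sym n)
    (c : Fin n → ℝ) (hc : ∀ i j, eigval X i = eigval X j → c i = c j) :
    ∑ k, c k * lambdaDir X U H.val k = ∑ k, c k * (Uᵀ * H.val * U) k k := by
  refine sum_blocks X c _ _ hc fun i => ?_
  rw [block_reindex, block_reindex]
  simp only [lam_blockEmb]
  rw [eig_sum (blockMat_symm X (hat_symm U H) i)]
  rfl

lemma lam_sq_sum {n : ℕ} (X : Matrix (Fin n) (Fin n) ℝ) (U : Matrix (Fin n) (Fin n) ℝ) (H : Sym n)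
    (c : Fin n → ℝ) (hc : ∀ i j, eigval X i = eigval X j → c i = c j) :
    ∑ k, c k * lambdaDir X U H.val k ^ 2 =
      ∑ k, ∑ l, if eigval X k = eigval X l then c k * (Uᵀ * H.val * U) k l ^ 2 else 0 := by
  have h1 : ∀ k, (∑ l, if eigval X k = eigval X l then c k * (Uᵀ * H.val * U) k l ^ 2 else 0) =
      c k * ∑ l ∈ blockSet X k, (Uᵀ * H.val * U) k l ^ 2 := by
    intro k
    rw [Finset.mul_sum, blockSet, Finset.sum_filter]
    refine Finset.sum_congr rfl fun l _ => ?_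
    simp only [eq_comm]
  simp only [h1]
  refine sum_blocks X c _ _ hc fun i => ?_
  have h2 : ∑ k ∈ blockSet X i, ∑ l ∈ blockSet X k, (Uᵀ * H.val * U) k l ^ 2 =
      ∑ k ∈ blockSet X i, ∑ l ∈ blockSet X i, (Uᵀ * H.val * U) k l ^ 2 := by
    refine Finset.sum_congr rfl fun k hk => ?_
    have hs : blockSet X k = blockSet X i := by
      have : eigval X k = eigval X i := by simpa [blockSet] using hk
      simp [blockSet, this]
    rw [hs]
  rw [h2, block_reindex, block_reindex]
  simp only [lam_blockEmb, block_reindex]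
  rw [eig_sq_sum (blockMat_symm X (hat_symm U H) i)]
  rfl

lemma curv_eq {n : ℕ} {X U : Matrix (Fin n) (Fin n) ℝ} (hU : U ∈ eigOrth X) (H : Sym n)
    (y : Fin n → ℝ) :
    curvTerm X U H.val y =
      2 * ∑ i, ∑ j, y i * (eigval X i - eigval X j)⁻¹ * (Uᵀ * H.val * U) i j ^ 2 := by
  unfold curvTerm
  congr 1
  refine Finset.sum_congr rfl fun i _ => ?_
  rw [pinv_orth hU]
  have e : Uᵀ * (H.val * (U * diagonal (fun j => (eigval X i - eigval X j)⁻¹) * Uᵀ) * H.val) * U =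
      (Uᵀ * H.val * U) * diagonal (fun j => (eigval X i - eigval X j)⁻¹) * (Uᵀ * H.val * U) := by
    simp only [Matrix.mul_assoc]
  rw [e]
  have hs : ∀ j, (Uᵀ * H.val * U) j i = (Uᵀ * H.val * U) i j := by
    intro j
    have := (hat_symm U H).apply i j
    simpa using this
  generalize Uᵀ * H.val * U = K at hs
  rw [Matrix.mul_apply, Finset.mul_sum]
  refine Finset.sum_congr rfl fun j _ => ?_
  rw [Matrix.mul_diagonal, hs]
  ring

/-- The algebraic identity for the quadratic form. -/
lemma quad_formula {n : ℕ} {X U : Matrix (Fin n) (Fin n) ℝ} (hU : U ∈ eigOrth X) (H : Sym n)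
    (y b : Fin n → ℝ) (a : Fin n → Fin n → ℝ)
    (hb : ∀ i j, eigval X i = eigval X j → b i = b j)
    (ha : ∀ i j k, eigval X i = eigval X j → a i k = a j k)
    (ha' : ∀ i j k, eigval X i = eigval X j → a k i = a k j) :
    (Dmat U (eigval X) y b a H.val * H.val).trace =
      ∑ k, (b k * lambdaDir X U H.val k + ∑ j, a k j * lambdaDir X U H.val j) *
        lambdaDir X U H.val k + curvTerm X U H.val y := by
  have hs : ∀ i j, (Uᵀ * H.val * U) j i = (Uᵀ * H.val * U) i j := by
    intro i j
    have := (hat_symm U H).apply i j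
    simpa using this
  rw [curv_eq hU]
  have hsum : ∀ k, ∑ j, a k j * lambdaDir X U H.val j = ∑ j, a k j * (Uᵀ * H.val * U) j j :=
    fun k => lam_sum X U H (a k) (fun i j h => ha' i j k h)
  simp only [hsum, add_mul, Finset.sum_add_distrib]
  rw [lam_sum X U H (fun k => ∑ j, a k j * (Uᵀ * H.val * U) j j)
    (fun i j h => Finset.sum_congr rfl fun k _ => by rw [ha i j k h])]
  have hsq : ∑ k, b k * lambdaDir X U H.val k * lambdaDir X U H.val k =
      ∑ k, b k * lambdaDir X U H.val k ^ 2 := Finset.sum_congr rfl fun k _ => by ring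
  rw [hsq, lam_sq_sum X U H b hb]
  have htr : ∀ M : Matrix (Fin n) (Fin n) ℝ, (U * M * Uᵀ * H.val).trace =
      (M * (Uᵀ * H.val * U)).trace := by
    intro M
    rw [Matrix.mul_assoc, Matrix.mul_assoc, Matrix.trace_mul_comm]
    simp only [Matrix.mul_assoc]
  rw [Dmat, Lw, Matrix.add_mul, Matrix.trace_add, htr, htr]
  generalize Uᵀ * H.val * U = K at hs
  set x := eigval X
  have e1 : (diagonal (fun k => ∑ j, a k j * K j j) * K).trace =
      ∑ k, (∑ j, a k j * K j j) * K k k := by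
    simp [Matrix.trace, Matrix.diag, Matrix.diagonal_mul]
  have e2 : ((Matrix.of fun i j => ddm x y b i j * K i j) * K).trace =
      ∑ i, ∑ j, ddm x y b i j * K i j ^ 2 := by
    simp only [Matrix.trace, Matrix.diag, Matrix.mul_apply, Matrix.of_apply]
    exact Finset.sum_congr rfl fun i _ => Finset.sum_congr rfl fun j _ => by rw [hs i j]; ring
  rw [e1, e2]
  have e3 : ∑ i, ∑ j, y j * (x i - x j)⁻¹ * K i j ^ 2 =
      - ∑ i, ∑ j, y i * (x i - x j)⁻¹ * K i j ^ 2 := by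
    rw [Finset.sum_comm, ← Finset.sum_neg_distrib]
    refine Finset.sum_congr rfl fun i _ => ?_
    rw [← Finset.sum_neg_distrib]
    refine Finset.sum_congr rfl fun j _ => ?_
    rw [hs i j, ← neg_sub (x i) (x j), inv_neg]
    ring
  have e4 : ∑ i, ∑ j, ddm x y b i j * K i j ^ 2 =
      (∑ k, ∑ l, if x k = x l then b k * K k l ^ 2 else 0) +
      (∑ i, ∑ j, y i * (x i - x j)⁻¹ * K i j ^ 2 - ∑ i, ∑ j, y j * (x i - x j)⁻¹ * K i j ^ 2) := by
    rw [← Finset.sum_sub_distrib, ← Finset.sum_add_distrib]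
    refine Finset.sum_congr rfl fun i _ => ?_
    rw [← Finset.sum_sub_distrib, ← Finset.sum_add_distrib]
    refine Finset.sum_congr rfl fun j _ => ?_
    unfold ddm
    split_ifs with h
    · simp [h]
    · rw [div_eq_mul_inv]; ring
  rw [e4, e3]
  ring


end Part4

section Part5

lemma grad_perm {n : ℕ} {θ : (Fin n → ℝ) → EReal} (hsym : SymmetricFn θ) {V : Set (Fin n → ℝ)}
    (hVo : IsOpen V) {fr : (Fin n → ℝ) → ℝ} (hfr : ∀ z ∈ V, θ z = ((fr z : ℝ) : EReal))
    {Gt : (Fin n → ℝ) → Fin n → ℝ} (hG : ∀ z ∈ V, HasGradAt ipV fr z (Gt z))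
    (σ : Equiv.Perm (Fin n)) {z : Fin n → ℝ} (hz : z ∈ V) (hz' : (fun i => z (σ i)) ∈ V) :
    Gt (fun i => z (σ i)) = fun i => Gt z (σ i) := by
  refine ipV_good.nondeg _ _ fun w => ?_
  have h1 := ipV_good.grad_line (hG _ hz') w
  have h2 := ipV_good.grad_line (hG _ hz) (fun i => w (σ.symm i))
  have hip : ipV (fun i => Gt z (σ i)) w = ipV (Gt z) (fun i => w (σ.symm i)) := by
    unfold ipV
    rw [← Equiv.sum_comp σ (fun i => Gt z i * w (σ.symm i))]
    simp
  rw [hip]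
  refine tendsto_nhds_unique (h1.congr' ?_) h2
  have hfp : ∀ u ∈ V, (fun i => u (σ i)) ∈ V → fr (fun i => u (σ i)) = fr u := by
    intro u hu hu'
    have := hsym u σ
    rw [hfr _ hu, hfr _ hu'] at this
    exact_mod_cast this
  filter_upwards [(tendsto_line (fun i => z (σ i)) w).eventually (hVo.mem_nhds hz'),
    (tendsto_line z (fun i => w (σ.symm i))).eventually (hVo.mem_nhds hz)] with t ht1 ht2
  have e : (fun i => z (σ i)) + t • w = fun i => (z + t • (fun i => w (σ.symm i))) (σ i) := by
    ext i; simp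
  rw [e] at ht1 ⊢
  rw [hfp _ ht2 ht1, hfp _ hz hz']

lemma swap_fix {n : ℕ} {z : Fin n → ℝ} {i j : Fin n} (h : z i = z j) :
    (fun k => z (Equiv.swap i j k)) = z := by
  ext k
  by_cases h1 : k = i
  · subst h1; simp [h]
  by_cases h2 : k = j
  · subst h2; simp [h]
  rw [Equiv.swap_apply_of_ne_of_ne h1 h2]

lemma grad_block {n : ℕ} {θ : (Fin n → ℝ) → EReal} (hsym : SymmetricFn θ) {V : Set (Fin n → ℝ)}
    (hVo : IsOpen V) {fr : (Fin n → ℝ) → ℝ} (hfr : ∀ z ∈ V, θ z = ((fr z : ℝ) : EReal))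
    {Gt : (Fin n → ℝ) → Fin n → ℝ} (hG : ∀ z ∈ V, HasGradAt ipV fr z (Gt z))
    {z : Fin n → ℝ} (hz : z ∈ V) (i j : Fin n) (h : z i = z j) : Gt z i = Gt z j := by
  have h1 := grad_perm hsym hVo hfr hG (Equiv.swap i j) hz (by rw [swap_fix h]; exact hz)
  rw [swap_fix h] at h1
  have := congrFun h1 i
  simpa using this

lemma theta_struct {n : ℕ} {θ : (Fin n → ℝ) → EReal} (hsym : SymmetricFn θ) {V : Set (Fin n → ℝ)}
    (hVo : IsOpen V) {fr : (Fin n → ℝ) → ℝ} (hfr : ∀ z ∈ V, θ z = ((fr z : ℝ) : EReal))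
    {Gt : (Fin n → ℝ) → Fin n → ℝ} (hG : ∀ z ∈ V, HasGradAt ipV fr z (Gt z))
    {x : Fin n → ℝ} (hx : x ∈ V) {Dt : (Fin n → ℝ) → Fin n → ℝ} (hD : IsLinearMap ℝ Dt)
    (hs : ∀ i, (fun z => (Gt z - Gt x - Dt (z - x)) i) =o[𝓝 x] (fun z => nrm ipV (z - x))) :
    ∃ (b : Fin n → ℝ) (a : Fin n → Fin n → ℝ),
      (∀ w k, Dt w k = b k * w k + ∑ j, a k j * w j) ∧
      (∀ i j, x i = x j → b i = b j) ∧
      (∀ i j k, x i = x j → a i k = a j k) ∧ (∀ i j k, x i = x j → a k i = a k j) := by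
  obtain ⟨b, a, hT, hb, ha, ha'⟩ := t_struct x (fun i j => Dt (Pi.single j 1) i) (by
    intro i i' hii k l
    set σ := Equiv.swap i i' with hσ
    have hxσ : (fun k => x (σ k)) = x := swap_fix hii
    have h1 := secV_line hD hs (Pi.single (σ l) 1) (σ k)
    have h2 := secV_line hD hs (Pi.single l 1) k
    refine tendsto_nhds_unique (h1.congr' ?_) h2
    filter_upwards [(tendsto_line x (Pi.single (σ l) (1 : ℝ))).eventually (hVo.mem_nhds hx),
      (tendsto_line x (Pi.single l (1 : ℝ))).eventually (hVo.mem_nhds hx)] with t ht1 ht2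
    have e : x + t • (Pi.single l (1 : ℝ) : Fin n → ℝ) =
        fun m => (x + t • (Pi.single (σ l) (1 : ℝ) : Fin n → ℝ)) (σ m) := by
      ext m
      have := congrFun hxσ m
      simp only [Pi.add_apply, Pi.smul_apply, Pi.single_apply, this]
      simp
    rw [e] at ht2 ⊢
    rw [grad_perm hsym hVo hfr hG σ ht1 ht2]
    have := grad_block hsym hVo hfr hG hx (σ k) k (congrFun hxσ k)
    rw [this])
  refine ⟨b, a, ?_, hb, ha, ha'⟩
  intro w k
  have hw : w = ∑ j, w j • (Pi.single j (1 : ℝ) : Fin n → ℝ) := by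
    ext m
    simp [Finset.sum_apply, Pi.single_apply]
  have h1 : Dt w = ∑ j, w j • Dt (Pi.single j (1 : ℝ)) := by
    conv_lhs => rw [hw]
    have := map_sum (hD.mk' Dt) (fun j => w j • (Pi.single j (1 : ℝ) : Fin n → ℝ)) Finset.univ
    simp only [IsLinearMap.mk'_apply, hD.map_smul] at this
    exact this
  rw [h1]
  simp only [Finset.sum_apply, Pi.smul_apply, smul_eq_mul, hT, mul_add, Finset.sum_add_distrib]
  congr 1
  · simp [mul_comm]
  · exact Finset.sum_congr rfl fun j _ => mul_comm _ _

/-- The conjugated diagonal matrix as an element of the space of symmetric matrices. -/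
def Acon {n : ℕ} (U : Matrix (Fin n) (Fin n) ℝ) (d : Fin n → ℝ) : Sym n :=
  ⟨U * diagonal d * Uᵀ, by
    change (U * diagonal d * Uᵀ)ᵀ = _
    simp [Matrix.transpose_mul, Matrix.mul_assoc]⟩

lemma ip_Acon {n : ℕ} (U : Matrix (Fin n) (Fin n) ℝ) (d : Fin n → ℝ) (H : Sym n) :
    ipM (Acon U d) H = ∑ k, d k * (Uᵀ * H.val * U) k k := by
  have e : (U * diagonal d * Uᵀ * H.val).trace = (diagonal d * (Uᵀ * H.val * U)).trace := by
    rw [Matrix.mul_assoc, Matrix.mul_assoc, Matrix.trace_mul_comm]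
    simp only [Matrix.mul_assoc]
  change (U * diagonal d * Uᵀ * H.val).trace = _
  rw [e, Matrix.trace]
  simp [Matrix.diag, Matrix.diagonal_mul]

lemma nrmV_eig {n : ℕ} (X : Sym n) :
    (fun Z : Sym n => nrm ipV (eigval Z.val - eigval X.val)) =O[𝓝 X] (fun Z => nrm ipM (Z - X)) := by
  have h := bo_sum fun i => (eigval_isBigO X i).norm_left
  refine Asymptotics.IsBigO.trans ?_ h
  refine Asymptotics.IsBigO.of_bound 1 (Eventually.of_forall fun Z => ?_)
  rw [one_mul, Real.norm_of_nonneg (nrm_nonneg _ _)]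
  exact (nrmV_le _).trans (le_abs_self _)

lemma Dmat_symm {n : ℕ} (U : Matrix (Fin n) (Fin n) ℝ) (x y b : Fin n → ℝ)
    (a : Fin n → Fin n → ℝ) (hb : ∀ i j, x i = x j → b i = b j) (H : Sym n) :
    (Dmat U x y b a H.val).IsSymm := by
  have h1 : (Matrix.of fun i j => ddm x y b i j * (Uᵀ * H.val * U) i j)ᵀ =
      Matrix.of fun i j => ddm x y b i j * (Uᵀ * H.val * U) i j := by
    ext i j
    have h2 : (Uᵀ * H.val * U) j i = (Uᵀ * H.val * U) i j := by
      simpa using (hat_symm U H).apply i j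
    simp only [Matrix.transpose_apply, Matrix.of_apply, h2]
    congr 1
    unfold ddm
    by_cases h : x i = x j
    · rw [if_pos h, if_pos h.symm, hb i j h]
    · rw [if_neg h, if_neg (Ne.symm h), ← neg_sub (y i), ← neg_sub (x i), neg_div_neg_eq]
  unfold Matrix.IsSymm Dmat Lw
  rw [Matrix.transpose_add]
  congr 1
  · rw [Matrix.transpose_mul, Matrix.transpose_mul, h1, Matrix.transpose_transpose]
    exact (Matrix.mul_assoc _ _ _).symm
  · simp [Matrix.transpose_mul, Matrix.mul_assoc]

lemma Dmat_add {n : ℕ} (U : Matrix (Fin n) (Fin n) ℝ) (x y b : Fin n → ℝ)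
    (a : Fin n → Fin n → ℝ) (H K : Matrix (Fin n) (Fin n) ℝ) :
    Dmat U x y b a (H + K) = Dmat U x y b a H + Dmat U x y b a K := by
  unfold Dmat
  have : diagonal (fun k => ∑ j, a k j * (Uᵀ * (H + K) * U) j j) =
      diagonal (fun k => ∑ j, a k j * (Uᵀ * H * U) j j) +
      diagonal (fun k => ∑ j, a k j * (Uᵀ * K * U) j j) := by
    rw [Matrix.diagonal_add]
    congr 1
    ext k
    rw [← Finset.sum_add_distrib]
    refine Finset.sum_congr rfl fun j _ => ?_
    rw [Matrix.mul_add, Matrix.add_mul, Matrix.add_apply, mul_add]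
  rw [Lw_add, this, Matrix.mul_add, Matrix.add_mul]
  abel

lemma Dmat_smul {n : ℕ} (U : Matrix (Fin n) (Fin n) ℝ) (x y b : Fin n → ℝ)
    (a : Fin n → Fin n → ℝ) (c : ℝ) (H : Matrix (Fin n) (Fin n) ℝ) :
    Dmat U x y b a (c • H) = c • Dmat U x y b a H := by
  unfold Dmat
  have : diagonal (fun k => ∑ j, a k j * (Uᵀ * (c • H) * U) j j) =
      c • diagonal (fun k => ∑ j, a k j * (Uᵀ * H * U) j j) := by
    rw [← Matrix.diagonal_smul]
    congr 1
    ext k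
    simp only [Pi.smul_apply, smul_eq_mul, Finset.mul_sum]
    refine Finset.sum_congr rfl fun j _ => ?_
    rw [Matrix.mul_smul, Matrix.smul_mul, Matrix.smul_apply, smul_eq_mul]
    ring
  rw [Lw_smul, this, Matrix.mul_smul, Matrix.smul_mul, smul_add]

lemma orth_indep {n : ℕ} {X U W : Matrix (Fin n) (Fin n) ℝ} (hU : U ∈ eigOrth X)
    (hW : W ∈ eigOrth X) (y : Fin n → ℝ) (hy : ∀ i j, eigval X i = eigval X j → y i = y j) :
    U * diagonal y * Uᵀ = W * diagonal y * Wᵀ := by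
  obtain ⟨p, hp⟩ := hermite (eigval X) y (fun _ => 0) (fun i j h => ⟨hy i j h, rfl⟩)
  have h1 := aeval_orth hU p
  have h2 := aeval_orth hW p
  have e : (fun k => p.eval (eigval X k)) = y := by
    ext k; exact (hp k).1
  rw [e] at h1 h2
  rw [← h1, h2]

lemma spec_second {n : ℕ} {θ : (Fin n → ℝ) → EReal} (hsym : SymmetricFn θ) (X : Sym n)
    {Gt Dt : (Fin n → ℝ) → Fin n → ℝ} (h : HasSecondDerivAt ipV θ (eigval X.val) Gt Dt)
    {U : Matrix (Fin n) (Fin n) ℝ} (hU : U ∈ eigOrth X.val) :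
    ∃ Gg Dg : Sym n → Sym n, HasSecondDerivAt ipM (specFn θ) X Gg Dg ∧
      ∀ H : Sym n, ipM (Dg H) H =
            ipV (Dt (lambdaDir X.val U H.val)) (lambdaDir X.val U H.val)
              + curvTerm X.val U H.val (Gt (eigval X.val)) := by
  obtain ⟨V', hV', fr, hfr', hG', hD, hs⟩ := h
  obtain ⟨V, hVV, hVo, hx⟩ := mem_nhds_iff.mp hV'
  have hfr : ∀ z ∈ V, θ z = ((fr z : ℝ) : EReal) := fun z hz => hfr' z (hVV hz)
  have hG : ∀ z ∈ V, HasGradAt ipV fr z (Gt z) := fun z hz => hG' z (hVV hz)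
  rw [secV_iff _ Gt Dt hD] at hs
  obtain ⟨b, a, hDt, hb, ha, ha'⟩ := theta_struct hsym hVo hfr hG hx hD hs
  choose W hW using fun Z : Sym n => eigOrth_nonempty (isHerm_sym Z)
  have hy := grad_block hsym hVo hfr hG hx
  have hlin : IsLinearMap ℝ (fun H : Sym n => (⟨Dmat U (eigval X.val) (Gt (eigval X.val)) b a H.val,
      Dmat_symm U _ _ b a hb H⟩ : Sym n)) :=
    ⟨fun H K => Subtype.ext (Dmat_add U _ _ b a H.val K.val),
      fun c H => Subtype.ext (Dmat_smul U _ _ b a c H.val)⟩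
  refine ⟨fun Z => Acon (W Z) (Gt (eigval Z.val)),
    fun H => ⟨Dmat U (eigval X.val) (Gt (eigval X.val)) b a H.val,
      Dmat_symm U _ _ b a hb H⟩, ⟨(fun Z : Sym n => eigval Z.val) ⁻¹' V, ?_,
      fun Z => fr (eigval Z.val), ?_, ?_, hlin, ?_⟩, ?_⟩
  · exact continuous_eigval.continuousAt.preimage_mem_nhds (hVo.mem_nhds hx)
  · intro Z hZ
    exact hfr _ hZ
  · intro Z hZ
    rw [ipM_good.hasGradAt_iff]
    have h1 := (ipV_good.hasGradAt_iff _ _ _).mp (hG _ hZ)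
    have h2 := (h1.comp_tendsto (continuous_eigval.tendsto Z)).trans_isBigO (nrmV_eig Z)
    have h3 := sum_exp (X := Z) (hW Z) (Gt (eigval Z.val)) (grad_block hsym hVo hfr hG hZ)
    refine (h2.add h3).congr_left fun Z' => ?_
    rw [ip_Acon]
    simp only [Function.comp, ipV, Pi.sub_apply, Submodule.coe_sub]
    ring
  · rw [secM_iff X _ _ hlin]
    intro i j
    have h1 := second_expand (X := X) hU W hW (Gt (eigval X.val)) b a
      (fun Z => Gt (eigval Z.val)) hy hb ha ha' (fun k => by
        have h2 := ((hs k).comp_tendsto (continuous_eigval.tendsto X)).trans_isBigO (nrmV_eig X)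
        refine h2.congr_left fun Z => ?_
        simp only [Function.comp, Pi.sub_apply, hDt]) i j
    refine h1.congr_left fun Z => ?_
    rw [orth_indep hU (hW X) _ hy]
    rfl
  · intro H
    have := quad_formula hU H (Gt (eigval X.val)) b a hb ha ha'
    change (Dmat U (eigval X.val) (Gt (eigval X.val)) b a H.val * H.val).trace = _
    rw [this]
    simp only [ipV, hDt]

lemma Acon_sub {n : ℕ} (U : Matrix (Fin n) (Fin n) ℝ) (x y : Fin n → ℝ) :
    Acon U x - Acon U y = Acon U (x - y) := by
  refine Subtype.ext ?_
  change U * diagonal x * Uᵀ - U * diagonal y * Uᵀ = U * diagonal (x - y) * Uᵀ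
  rw [← Matrix.sub_mul, ← Matrix.mul_sub, Matrix.diagonal_sub]
  rfl

lemma Acon_lin {n : ℕ} (U : Matrix (Fin n) (Fin n) ℝ) : IsLinearMap ℝ (Acon U) := by
  constructor
  · intro x y
    refine Subtype.ext ?_
    change U * diagonal (x + y) * Uᵀ = U * diagonal x * Uᵀ + U * diagonal y * Uᵀ
    rw [← Matrix.add_mul, ← Matrix.mul_add, Matrix.diagonal_add]
    rfl
  · intro c x
    refine Subtype.ext ?_
    change U * diagonal (c • x) * Uᵀ = c • (U * diagonal x * Uᵀ)
    rw [Matrix.diagonal_smul, Matrix.mul_smul, Matrix.smul_mul]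

lemma nrm_Acon {n : ℕ} {U : Matrix (Fin n) (Fin n) ℝ} (hU : U * Uᵀ = 1) (x : Fin n → ℝ) :
    nrm ipM (Acon U x) = nrm ipV x := by
  unfold nrm
  congr 1
  rw [ip_Acon]
  have h3 : Uᵀ * U = 1 := mul_eq_one_comm.mp hU
  have e : Uᵀ * (Acon U x).val * U = diagonal x := by
    change Uᵀ * (U * diagonal x * Uᵀ) * U = _
    have : Uᵀ * (U * diagonal x * Uᵀ) * U = (Uᵀ * U) * diagonal x * (Uᵀ * U) := by
      simp only [Matrix.mul_assoc]
    rw [this, h3, Matrix.one_mul, Matrix.mul_one]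
  rw [e]
  simp [ipV]

lemma continuous_Acon {n : ℕ} (U : Matrix (Fin n) (Fin n) ℝ) : Continuous (Acon U) := by
  refine Continuous.subtype_mk ?_ _
  fun_prop

lemma theta_second {n : ℕ} {θ : (Fin n → ℝ) → EReal} (hsym : SymmetricFn θ) (X : Sym n)
    (h : TwiceDiffAt ipM (specFn θ) X) : TwiceDiffAt ipV θ (eigval X.val) := by
  obtain ⟨Gg, Dg, V, hV, fr, hfr, hG, hD, hs⟩ := h
  obtain ⟨U, hU⟩ := eigOrth_nonempty (isHerm_sym X)
  rw [secM_iff X Gg Dg hD] at hs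
  have hAX : Acon U (eigval X.val) = X := Subtype.ext hU.2.symm
  have hspec : ∀ x, specFn θ (Acon U x) = θ x := by
    intro x
    obtain ⟨σ, hσ⟩ := eigval_conj_diag U hU.1 x
    have e : eigval (Acon U x).val = fun i => x (σ i) := funext hσ
    unfold specFn
    rw [e, hsym]
  have hsum : ∀ (M : Matrix (Fin n) (Fin n) ℝ) i, (Uᵀ * M * U) i i =
      ∑ k, ∑ l, U l i * U k i * M l k := by
    intro M i
    simp only [Matrix.mul_apply, Finset.sum_mul, Matrix.transpose_apply]
    exact Finset.sum_congr rfl fun k _ => Finset.sum_congr rfl fun l _ => by ring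
  have hlin : IsLinearMap ℝ (fun (w : Fin n → ℝ) i => (Uᵀ * (Dg (Acon U w)).val * U) i i) := by
    constructor
    · intro x y
      ext i
      rw [(Acon_lin U).map_add, hD.map_add]
      simp [Matrix.mul_add, Matrix.add_mul]
    · intro c x
      ext i
      rw [(Acon_lin U).map_smul, hD.map_smul]
      simp
  refine ⟨fun x i => (Uᵀ * (Gg (Acon U x)).val * U) i i,
    fun w i => (Uᵀ * (Dg (Acon U w)).val * U) i i, Acon U ⁻¹' V, ?_, fun x => fr (Acon U x),
    ?_, ?_, hlin, ?_⟩
  · refine (continuous_Acon U).continuousAt.preimage_mem_nhds ?_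
    rwa [hAX]
  · intro z hz
    rw [← hspec]
    exact hfr _ hz
  · intro z hz
    rw [ipV_good.hasGradAt_iff]
    have h1 := ((ipM_good.hasGradAt_iff _ _ _).mp (hG _ hz)).comp_tendsto
      ((continuous_Acon U).tendsto z)
    refine h1.congr (fun y => ?_) (fun y => ?_)
    · simp only [Function.comp]
      rw [Acon_sub]
      congr 1
      have hc : ipM (Gg (Acon U z)) (Acon U (y - z)) = ipM (Acon U (y - z)) (Gg (Acon U z)) := by
        unfold ipM; rw [Matrix.trace_mul_comm]
      rw [hc, ip_Acon, ipV]
      exact Finset.sum_congr rfl fun k _ => mul_comm _ _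
    · simp only [Function.comp]
      rw [Acon_sub, nrm_Acon hU.1]
  · rw [secV_iff _ _ _ hlin]
    intro i
    have h1 : ∀ k l, (fun z : Fin n → ℝ => U l i * U k i *
        (Gg (Acon U z) - Gg X - Dg (Acon U z - X)).val l k) =o[𝓝 (eigval X.val)]
          (fun z => nrm ipV (z - eigval X.val)) := by
      intro k l
      have ht : Tendsto (Acon U) (𝓝 (eigval X.val)) (𝓝 X) := by
        have := (continuous_Acon U).tendsto (eigval X.val)
        rwa [hAX] at this
      refine (((hs l k).comp_tendsto ht).congr_right fun z => ?_).const_mul_left _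
      simp only [Function.comp]
      conv_lhs => rw [← hAX]
      rw [Acon_sub, nrm_Acon hU.1]
    refine (lo_sum fun k => lo_sum fun l => h1 k l).congr_left fun z => ?_
    rw [← hsum]
    have e : Acon U z - X = Acon U (z - eigval X.val) := by rw [← Acon_sub, hAX]
    rw [e]
    simp only [Pi.sub_apply, hAX, Submodule.coe_sub, Matrix.mul_sub, Matrix.sub_mul,
      Matrix.sub_apply]


end Part5

/-- Corollary 4.4: for a prox-regular spectral function, twice
differentiability of `g` at `X` is equivalent to twice differentiability of `θ` at `λ(X)`,
together with the formula for the second derivative quadratic form. -/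
theorem twice_diff_spectral {n : ℕ} (θ : (Fin n → ℝ) → EReal) (X : Sym n)
    (hsym : SymmetricFn θ)
    (hpr : ProxRegularAt ipM (specFn θ) X) :
    (TwiceDiffAt ipM (specFn θ) X ↔ TwiceDiffAt ipV θ (eigval X.val)) ∧
    (∀ Gg Dg : Sym n → Sym n, HasSecondDerivAt ipM (specFn θ) X Gg Dg →
      ∀ Gt Dt : (Fin n → ℝ) → Fin n → ℝ, HasSecondDerivAt ipV θ (eigval X.val) Gt Dt →
        ∀ U ∈ eigOrth X.val, ∀ H : Sym n,
          ipM (Dg H) H =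
            ipV (Dt (lambdaDir X.val U H.val)) (lambdaDir X.val U H.val)
              + curvTerm X.val U H.val (Gt (eigval X.val))) := by
  refine ⟨⟨theta_second hsym X, ?_⟩, ?_⟩
  · rintro ⟨Gt, Dt, h⟩
    obtain ⟨U, hU⟩ := eigOrth_nonempty (isHerm_sym X)
    obtain ⟨Gg, Dg, hg, -⟩ := spec_second hsym X h hU
    exact ⟨Gg, Dg, hg⟩
  · intro Gg Dg hg Gt Dt ht U hU H
    obtain ⟨Gg', Dg', hg', hf⟩ := spec_second hsym X ht hU
    rw [secondM_unique hg hg']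
    exact hf H


end SpecPaper
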